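/- Let k ≥ 3 and let m, s be natural numbers with 1 ≤ m ≤ k−1 and s > m. Let X be sufficiently large in terms of s and k, and suppose q = p_1⋯p_{m−1} where p_i ∈ Y_i for 1 ≤ i ≤ m−1. Let 𝒫_m be any set of 2sk⁴ primes contained in Y_m, and let b be an integer with 0 ≤ b < q and (b,q) = 1. Then there is a constant C depending at most on s and k such that I_{s,m}(X;q,b) ≤ C·max_{p∈𝒫_m} p^{2s−2m+3m(m+1)/2}·max_{a∈ℬ(p)} I_{s−m,m+1}(X;pq,b+aq), where ℬ(p) denotes the set of integers a with 0 ≤ a < p and (b+aq, pq) = 1. -/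

import Mathlib

/-- I_{s,m}(X;q,b): the number of integral solutions of the system (8.1), i.e. of
∑_i ((q x_i + b)^k - (q y_i + b)^k) = 0 and ∑_i (x_i^j - y_i^j) = 0 (1 ≤ j ≤ m-1),
with 0 ≤ x_i, y_i ≤ X/q. -/
noncomputable def Icount (s k m : ℕ) (X : ℝ) (q : ℕ) (b : ℤ) : ℕ :=
  Set.ncard {xy : (Fin s → ℤ) × (Fin s → ℤ) |
    (∀ i, 0 ≤ xy.1 i ∧ (xy.1 i : ℝ) ≤ X / q) ∧
    (∀ i, 0 ≤ xy.2 i ∧ (xy.2 i : ℝ) ≤ X / q) ∧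
    (∑ i, (((q:ℤ) * xy.1 i + b)^k - ((q:ℤ) * xy.2 i + b)^k) = 0) ∧
    ∀ j ∈ Finset.Icc 1 (m-1), ∑ i, ((xy.1 i)^j - (xy.2 i)^j) = 0}

/-!
Each count is an additive energy, the number of pairs of tuples on which the vector-valued form of
the system agrees. Tuples with a zero coordinate or with two equal coordinates carry at most a small
proportion of the energy. For any other tuple `x` the product of `q`, the Jacobian determinant of
the forms of degrees `1, …, m - 1, k` and all the `q * x i + b` is a nonzero integer, bounded by a
power of `X`, so some prime `p ∈ 𝒫_m` does not divide it. By pigeonhole one prime `p` carries a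
positive proportion of the energy. By Hölder's inequality the last `s - m` variables may be assumed
to lie in a single residue class `a` modulo `p`, at a cost of `p ^ (2 * (s - m))`. Expanding the
forms about `a`, the first `m` variables satisfy congruences modulo `p, p ^ 2, …, p ^ m`; the bound
for nonsingular solutions modulo `p` and Hensel lifting show that given `y` at most
`O(p ^ (m * (m + 1) / 2))` choices of `x` remain, while `y` itself is chosen among at most
`p ^ (m * (m + 1))` tuples. For fixed `x` and `y` the substitution `x i = p * u i + a` produces a
system in `u` of the same kind, modulo `p * q`; being small compared with `p * q`, the `u i` satisfy
one more equation, of degree `m`, and hence are counted by `I_{s-m,m+1}(X;pq,b+aq)`.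
-/

open Finset

/-- The additive energy of `φ` on `A`: the number of pairs in `A` with equal image under `φ`. -/
def energyOn {τ Γ : Type*} [DecidableEq Γ] (φ : τ → Γ) (A : Finset τ) : ℕ :=
  #{z ∈ A ×ˢ A | φ z.1 = φ z.2}

section Energy

variable {τ σ Γ Δ : Type*} [DecidableEq Γ] [DecidableEq Δ]

lemma energyOn_eq_sum_sq (φ : τ → Γ) {A : Finset τ} {H : Finset Γ} (hH : ∀ x ∈ A, φ x ∈ H) :
    energyOn φ A = ∑ h ∈ H, #{x ∈ A | φ x = h} ^ 2 := by
  rw [energyOn, card_eq_sum_card_fiberwise (f := fun z : τ × τ => φ z.1) (t := H)]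
  · refine sum_congr rfl fun h _ => ?_
    rw [sq, ← card_product]
    congr 1
    ext ⟨x, y⟩
    simp only [mem_filter, mem_product]
    grind
  · intro z hz
    exact hH _ (mem_product.mp (mem_filter.mp hz).1).1

lemma card_le_energyOn (φ : τ → Γ) (A : Finset τ) : #A ≤ energyOn φ A :=
  card_le_card_of_injOn (fun x => (x, x)) (fun x hx => by simpa using hx)
    fun _ _ _ _ h => congrArg Prod.fst h

lemma energyOn_congr (φ : τ → Γ) (φ' : τ → Δ) {A : Finset τ}
    (h : ∀ x ∈ A, ∀ y ∈ A, φ x = φ y ↔ φ' x = φ' y) : energyOn φ A = energyOn φ' A :=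
  congrArg card <| filter_congr fun _ hz =>
    h _ (mem_product.mp hz).1 _ (mem_product.mp hz).2

lemma energyOn_le_of_injOn {φ : τ → Γ} {φ' : σ → Δ} {A : Finset τ} {B : Finset σ} (f : τ → σ)
    (hf : Set.InjOn f A) (hAB : ∀ x ∈ A, f x ∈ B)
    (h : ∀ x ∈ A, ∀ y ∈ A, φ x = φ y → φ' (f x) = φ' (f y)) :
    energyOn φ A ≤ energyOn φ' B := by
  refine card_le_card_of_injOn (Prod.map f f) ?_ ?_
  · intro z hz
    simp only [coe_filter, mem_product, Set.mem_ofPred_eq] at hz ⊢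
    exact ⟨⟨hAB _ hz.1.1, hAB _ hz.1.2⟩, h _ hz.1.1 _ hz.1.2 hz.2⟩
  · refine (hf.prodMap hf).mono fun z hz => ?_
    simpa using (mem_filter.mp hz).1

lemma energyOn_le_of_subset_biUnion [DecidableEq τ] {κ : Type*} (φ : τ → Γ) {A : Finset τ}
    {L : Finset κ} {B : κ → Finset τ} (h : A ⊆ L.biUnion B) :
    energyOn φ A ≤ #L * ∑ l ∈ L, energyOn φ (B l) := by
  set H := (L.biUnion B).image φ
  have hB : ∀ l ∈ L, ∀ x ∈ B l, φ x ∈ H := fun l hl x hx =>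
    mem_image_of_mem _ (mem_biUnion.mpr ⟨l, hl, hx⟩)
  rw [energyOn_eq_sum_sq φ fun x hx => mem_image_of_mem φ (h hx),
    sum_congr rfl fun l hl => energyOn_eq_sum_sq φ (hB l hl), sum_comm, mul_sum]
  refine sum_le_sum fun t _ => ?_
  have hcard : #{x ∈ A | φ x = t} ≤ ∑ l ∈ L, #{x ∈ B l | φ x = t} := by
    refine (card_le_card fun x hx => ?_).trans card_biUnion_le
    obtain ⟨hxA, hxt⟩ := mem_filter.mp hx
    obtain ⟨l, hl, hxl⟩ := mem_biUnion.mp (h hxA)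
    exact mem_biUnion.mpr ⟨l, hl, mem_filter.mpr ⟨hxl, hxt⟩⟩
  exact (Nat.pow_le_pow_left hcard 2).trans sq_sum_le_card_mul_sum_sq

lemma exists_energyOn_le_of_subset_biUnion [DecidableEq τ] {κ : Type*} (φ : τ → Γ)
    {A : Finset τ} {L : Finset κ} {B : κ → Finset τ} (h : A ⊆ L.biUnion B)
    (hA : A.Nonempty) : ∃ l ∈ L, energyOn φ A ≤ #L ^ 2 * energyOn φ (B l) := by
  have hL : L.Nonempty := by
    obtain ⟨x, hx⟩ := hA
    obtain ⟨l, hl, -⟩ := mem_biUnion.mp (h hx)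
    exact ⟨l, hl⟩
  obtain ⟨l, hl, hmax⟩ := L.exists_max_image (fun l => energyOn φ (B l)) hL
  refine ⟨l, hl, (energyOn_le_of_subset_biUnion φ h).trans ?_⟩
  rw [sq, mul_assoc]
  exact Nat.mul_le_mul_left _ (sum_le_card_nsmul _ _ _ hmax)

variable [AddCommGroup Γ]

lemma card_filter_sub_eq_le_energyOn (φ : τ → Γ) (A : Finset τ) (h : Γ) :
    #{z ∈ A ×ˢ A | φ z.1 - φ z.2 = h} ≤ energyOn φ A := by
  set H := A.image φ
  set r : Γ → ℕ := fun t => #{x ∈ A | φ x = t}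
  have hcount : #{z ∈ A ×ˢ A | φ z.1 - φ z.2 = h} = ∑ t ∈ H, r (t + h) * r t := by
    rw [card_eq_sum_card_fiberwise (f := fun z : τ × τ => φ z.2) (t := H)]
    · refine sum_congr rfl fun t _ => ?_
      rw [← card_product]
      congr 1
      ext ⟨x, y⟩
      simp only [mem_filter, mem_product, sub_eq_iff_eq_add]
      grind
    · intro z hz
      exact mem_image_of_mem _ (mem_product.mp (mem_filter.mp hz).1).2
  have henergy : energyOn φ A = ∑ t ∈ H, r t ^ 2 :=
    energyOn_eq_sum_sq φ fun x hx => mem_image_of_mem _ hx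
  have hshift : ∑ t ∈ H, r (t + h) ^ 2 ≤ energyOn φ A := by
    rw [energyOn_eq_sum_sq φ (H := H ∪ H.image (· + h)) fun x hx =>
        mem_union_left _ (mem_image_of_mem _ hx),
      ← sum_image (g := (· + h)) (f := fun t => r t ^ 2) (add_left_injective h).injOn]
    exact sum_le_sum_of_subset subset_union_right
  have hamgm : 2 * ∑ t ∈ H, r (t + h) * r t ≤ ∑ t ∈ H, r (t + h) ^ 2 + ∑ t ∈ H, r t ^ 2 := by
    rw [mul_sum, ← sum_add_distrib]
    exact sum_le_sum fun t _ => by simpa only [mul_assoc] using two_mul_le_add_sq (r (t + h)) (r t)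
  omega

lemma energyOn_prod_le (Φ : τ → Γ) (Ψ : σ → Γ) (T : Finset τ) (S : Finset σ) {K M : ℕ}
    (hK : ∀ y ∈ T, ∀ R ⊆ T, (∀ x ∈ R, ∃ u ∈ S, ∃ v ∈ S, Φ x + Ψ u = Φ y + Ψ v) → #R ≤ K)
    (hM : ∀ h, #{z ∈ S ×ˢ S | Ψ z.1 - Ψ z.2 = h} ≤ M) :
    energyOn (fun z : τ × σ => Φ z.1 + Ψ z.2) (T ×ˢ S) ≤ #T * (K * M) := by
  classical
  set E := {z ∈ (T ×ˢ S) ×ˢ (T ×ˢ S) | Φ z.1.1 + Ψ z.1.2 = Φ z.2.1 + Ψ z.2.2} with hE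
  have hpairs : ∀ y ∈ T, ∀ x, #{z ∈ E | z.2.1 = y ∧ z.1.1 = x} ≤ M := by
    intro y _ x
    refine (card_le_card_of_injOn (fun z => (z.1.2, z.2.2)) (fun z hz => ?_) ?_).trans
      (hM (Φ y - Φ x))
    · simp only [hE, coe_filter, mem_filter, mem_product, Set.mem_ofPred_eq] at hz ⊢
      obtain ⟨⟨⟨hz1, hz2⟩, heq⟩, rfl, rfl⟩ := hz
      exact ⟨⟨hz1.2, hz2.2⟩, by rw [sub_eq_sub_iff_add_eq_add, add_comm, heq, add_comm]⟩
    · rintro ⟨⟨x₁, u₁⟩, y₁, v₁⟩ h₁ ⟨⟨x₂, u₂⟩, y₂, v₂⟩ h₂ h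
      simp only [coe_filter, Set.mem_ofPred_eq, Prod.mk.injEq] at h₁ h₂ h ⊢
      grind
  have hfirst : ∀ y ∈ T, #{z ∈ E | z.2.1 = y} ≤ K * M := by
    intro y hy
    refine (card_le_mul_card_image _ M (f := fun z => z.1.1) fun x _ => ?_).trans ?_
    · simpa only [filter_filter] using hpairs y hy x
    · rw [mul_comm]
      refine Nat.mul_le_mul_right _ (hK y hy _ ?_ ?_) <;>
        simp only [hE, subset_iff, mem_image, mem_filter, mem_product] <;> grind
  calc #E ≤ (K * M) * #T :=
        card_le_mul_card_image_of_maps_to (f := fun z => z.2.1)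
          (fun z hz => (mem_product.mp (mem_product.mp (mem_filter.mp hz).1).2).1) _ hfirst
    _ = #T * (K * M) := mul_comm _ _

end Energy

section TupleSum

/-- The additive extension `x ↦ ∑ l, ψ (x l)` of a map `ψ` to tuples; equations between such
sums are the diagonal systems of this file. -/
def tupleSum {ι α Γ : Type*} [Fintype ι] [AddCommMonoid Γ] (ψ : α → Γ) (x : ι → α) : Γ :=
  ∑ l, ψ (x l)

variable {α ι Γ : Type*} [Fintype ι] [DecidableEq ι] [AddCommGroup Γ]

lemma tupleSum_update (ψ : α → Γ) (x : ι → α) (i : ι) (t : α) :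
    tupleSum ψ (Function.update x i t) = tupleSum ψ x + (ψ t - ψ (x i)) := by
  simp only [tupleSum, Function.apply_update fun _ => ψ, sum_update_of_mem (mem_univ i)]
  rw [← sum_erase_add univ (fun l => ψ (x l)) (mem_univ i), sdiff_singleton_eq_erase]
  abel

lemma card_mul_energyOn_filter_coord_eq_le [DecidableEq α] [DecidableEq Γ] (ψ : α → Γ)
    (W : Finset α) (c : α) (i : ι) :
    #W * energyOn (tupleSum ψ) {x ∈ Fintype.piFinset fun _ : ι => W | x i = c} ≤
      energyOn (tupleSum ψ) (Fintype.piFinset fun _ : ι => W) := by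
  rw [energyOn, ← card_product]
  refine card_le_card_of_injOn
    (fun z => (Function.update z.2.1 i z.1, Function.update z.2.2 i z.1)) ?_ ?_
  · rintro ⟨t, x, y⟩ hz
    simp only [coe_product, Set.mem_prod, mem_coe, mem_filter, mem_product,
      Fintype.mem_piFinset] at hz ⊢
    obtain ⟨ht, ⟨⟨hx, hxi⟩, hy, hyi⟩, hxy⟩ := hz
    refine ⟨⟨?_, ?_⟩, by rw [tupleSum_update, tupleSum_update, hxy, hxi, hyi]⟩ <;>
      grind [Function.update_apply]
  · rintro ⟨t, x, y⟩ hz ⟨t', x', y'⟩ hz' h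
    simp only [coe_product, Set.mem_prod, mem_coe, mem_filter, mem_product] at hz hz'
    simp only [Prod.mk.injEq] at h
    have ht : t = t' := by simpa using congrFun h.1 i
    have hinj : ∀ u u' : ι → α, u i = c → u' i = c →
        Function.update u i t = Function.update u' i t' → u = u' := fun u u' hu hu' he =>
      funext fun l => by have := congrFun he l; grind [Function.update_apply]
    rw [ht, hinj x x' hz.2.1.1.2 hz'.2.1.1.2 h.1, hinj y y' hz.2.1.2.2 hz'.2.1.2.2 h.2]

lemma energyOn_filter_coord_eq_coord_le_energyOn [DecidableEq α] [DecidableEq Γ] (ψ : α → Γ)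
    (W : Finset α) {i j : ι} (hij : i ≠ j) :
    energyOn (tupleSum ψ) {x ∈ Fintype.piFinset fun _ : ι => W | x i = x j} ≤
      energyOn (fun z : α × ({l // l ∉ ({i, j} : Finset ι)} → α) => 2 • ψ z.1 + tupleSum ψ z.2)
        (W ×ˢ Fintype.piFinset fun _ => W) := by
  have hsplit : ∀ x : ι → α, x i = x j →
      tupleSum ψ x = 2 • ψ (x i) +
        tupleSum ψ fun l : {l // l ∉ ({i, j} : Finset ι)} => x l := by
    intro x hx
    simp only [tupleSum]
    rw [← sum_add_sum_compl {i, j}, sum_pair hij, ← hx, two_nsmul, add_right_inj,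
      ← sum_subtype {i, j}ᶜ (fun _ => mem_compl) fun l => ψ (x l)]
  refine energyOn_le_of_injOn (fun x => (x i, fun l => x l)) ?_ ?_ ?_
  · intro x hx y hy h
    simp only [coe_filter, Set.mem_ofPred_eq, Prod.mk.injEq] at hx hy h
    ext l
    by_cases hl : l ∈ ({i, j} : Finset ι)
    · grind
    · exact congrFun h.2 ⟨l, hl⟩
  · simp only [mem_filter, Fintype.mem_piFinset, mem_product]
    exact fun x hx => ⟨hx.1 i, fun l => hx.1 l⟩
  · intro x hx y hy h
    rwa [hsplit x (mem_filter.mp hx).2, hsplit y (mem_filter.mp hy).2] at h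

end TupleSum

section Fourier

variable {τ σ α ι κ G : Type*} [Fintype ι] [Fintype κ] [AddCommGroup G]

lemma addChar_tupleSum (χ : AddChar G ℂ) (ψ : α → G) (x : ι → α) :
    χ (tupleSum ψ x) = ∏ l, χ (ψ (x l)) :=
  map_prod χ.toMonoidHom (fun l => Multiplicative.ofAdd (ψ (x l))) univ

variable [DecidableEq ι] [DecidableEq κ]

lemma sum_addChar_tupleSum (χ : AddChar G ℂ) (ψ : α → G) (W : Finset α) :
    ∑ x ∈ Fintype.piFinset fun _ : ι => W, χ (tupleSum ψ x) =
      (∑ x ∈ W, χ (ψ x)) ^ Fintype.card ι := by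
  rw [← card_univ, ← prod_const, prod_univ_sum]
  simp only [addChar_tupleSum]

lemma sum_addChar_add_tupleSum (χ : AddChar G ℂ) (Φ : τ → G) (T : Finset τ) (ψ : α → G)
    (W : Finset α) :
    ∑ z ∈ T ×ˢ Fintype.piFinset fun _ : ι => W, χ (Φ z.1 + tupleSum ψ z.2) =
      (∑ t ∈ T, χ (Φ t)) * (∑ x ∈ W, χ (ψ x)) ^ Fintype.card ι := by
  rw [← sum_addChar_tupleSum, sum_mul_sum, sum_product]
  simp only [AddChar.map_add_eq_mul]

variable [DecidableEq G]

lemma card_mul_energyOn [Fintype G] (φ : τ → G) (A : Finset τ) :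
    (Fintype.card G : ℝ) * energyOn φ A = ∑ χ : AddChar G ℂ, ‖∑ x ∈ A, χ (φ x)‖ ^ 2 := by
  have hsq : ∀ χ : AddChar G ℂ, ((‖∑ x ∈ A, χ (φ x)‖ ^ 2 : ℝ) : ℂ) =
      ∑ z ∈ A ×ˢ A, χ (φ z.1 - φ z.2) := by
    intro χ
    rw [Complex.ofReal_pow, ← Complex.mul_conj', map_sum, sum_mul_sum, sum_product]
    simp only [sub_eq_add_neg, AddChar.map_add_eq_mul, AddChar.map_neg_eq_conj]
  have key : ((Fintype.card G : ℝ) * energyOn φ A : ℂ) =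
      ∑ χ : AddChar G ℂ, ((‖∑ x ∈ A, χ (φ x)‖ ^ 2 : ℝ) : ℂ) := by
    simp_rw [hsq]
    rw [sum_comm]
    simp_rw [AddChar.sum_apply_eq_ite, sub_eq_zero]
    rw [← sum_filter, sum_const, energyOn, nsmul_eq_mul, mul_comm, Complex.ofReal_natCast]
  exact_mod_cast key

lemma card_mul_energyOn_tupleSum [Fintype G] (ψ : α → G) (W : Finset α) :
    (Fintype.card G : ℝ) * energyOn (tupleSum ψ) (Fintype.piFinset fun _ : ι => W) =
      ∑ χ : AddChar G ℂ, (‖∑ x ∈ W, χ (ψ x)‖ ^ Fintype.card ι) ^ 2 := by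
  simp only [card_mul_energyOn, sum_addChar_tupleSum, norm_pow]

lemma card_mul_energyOn_add_tupleSum [Fintype G] (Φ : τ → G) (T : Finset τ) (ψ : α → G)
    (W : Finset α) :
    (Fintype.card G : ℝ) * energyOn (fun z : τ × (ι → α) => Φ z.1 + tupleSum ψ z.2)
        (T ×ˢ Fintype.piFinset fun _ => W) =
      ∑ χ : AddChar G ℂ,
        ‖∑ t ∈ T, χ (Φ t)‖ ^ 2 * ‖∑ x ∈ W, χ (ψ x)‖ ^ (2 * Fintype.card ι) := by
  simp only [card_mul_energyOn, sum_addChar_add_tupleSum, norm_mul, norm_pow, mul_pow, ← pow_mul,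
    mul_comm 2]

lemma energyOn_add_tupleSum_biUnion_le [Finite G] [Nonempty ι] [DecidableEq α] (Φ : τ → G)
    (T : Finset τ) (ψ : α → G) {L : Finset σ} {V : σ → Finset α}
    (hV : (L : Set σ).PairwiseDisjoint V) :
    (energyOn (fun z : τ × (ι → α) => Φ z.1 + tupleSum ψ z.2)
        (T ×ˢ Fintype.piFinset fun _ => L.biUnion V) : ℝ) ≤
      (#L : ℝ) ^ (2 * Fintype.card ι - 1) * ∑ a ∈ L,
        (energyOn (fun z : τ × (ι → α) => Φ z.1 + tupleSum ψ z.2)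
          (T ×ˢ Fintype.piFinset fun _ => V a) : ℝ) := by
  cases nonempty_fintype G
  have hG : (0 : ℝ) < Fintype.card G := mod_cast Fintype.card_pos
  refine le_of_mul_le_mul_left ?_ hG
  rw [card_mul_energyOn_add_tupleSum, mul_left_comm, mul_sum]
  simp_rw [card_mul_energyOn_add_tupleSum]
  rw [sum_comm, mul_sum]
  refine sum_le_sum fun χ _ => ?_
  obtain ⟨n, hn⟩ : ∃ n, 2 * Fintype.card ι = n + 1 :=
    ⟨2 * Fintype.card ι - 1, by have := Fintype.card_pos (α := ι); omega⟩
  rw [hn, Nat.add_sub_cancel, ← mul_sum, mul_left_comm, sum_biUnion hV]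
  gcongr
  exact (pow_le_pow_left₀ (norm_nonneg _) (norm_sum_le _ _) _).trans
    (pow_sum_le_card_mul_sum_pow (fun _ _ => norm_nonneg _) n)

lemma sum_norm_sum_addChar_pow_le [Fintype G] (ψ : α → G) (W : Finset α) :
    ∑ χ : AddChar G ℂ, ‖∑ x ∈ W, χ (ψ x)‖ ^ Fintype.card ι ≤
      Fintype.card G * √(energyOn (tupleSum ψ) (Fintype.piFinset fun _ : ι => W)) := by
  refine le_of_sq_le_sq ?_ (by positivity)
  rw [mul_pow, Real.sq_sqrt (by positivity), sq (Fintype.card G : ℝ), mul_assoc,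
    card_mul_energyOn_tupleSum, ← AddChar.card_eq (α := G)]
  exact sq_sum_le_card_mul_sum_sq

lemma sq_mul_pow_le_add_pow {a c η : ℝ} (ha : 0 ≤ a) (hc : 0 ≤ c) (hη : 0 < η) (n : ℕ) :
    a ^ 2 * c ^ n ≤ η ^ 2 * c ^ (n + 2) + η⁻¹ ^ n * a ^ (n + 2) := by
  rcases le_total a (η * c) with h | h
  · calc a ^ 2 * c ^ n ≤ (η * c) ^ 2 * c ^ n := by gcongr
      _ = η ^ 2 * c ^ (n + 2) := by ring
      _ ≤ _ := le_add_of_nonneg_right (by positivity)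
  · have hc' : c ≤ η⁻¹ * a := by rwa [inv_mul_eq_div, le_div_iff₀' hη]
    calc a ^ 2 * c ^ n ≤ a ^ 2 * (η⁻¹ * a) ^ n := by gcongr
      _ = η⁻¹ ^ n * a ^ (n + 2) := by ring
      _ ≤ _ := le_add_of_nonneg_left (by positivity)

-- The exponential sum of `2 • ψ` is split off by Young's inequality: its `card ι`-th moment is
-- the square root of an energy, since doubling is injective.
lemma energyOn_two_nsmul_add_tupleSum_le [Finite G]
    (hG : Function.Injective fun g : G => 2 • g)
    (hικ : Fintype.card ι = Fintype.card κ + 2) (ψ : α → G) (W : Finset α) {η : ℝ} (hη : 0 < η) :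
    (energyOn (fun z : α × (κ → α) => 2 • ψ z.1 + tupleSum ψ z.2)
        (W ×ˢ Fintype.piFinset fun _ => W) : ℝ) ≤
      η ^ 2 * energyOn (tupleSum ψ) (Fintype.piFinset fun _ : ι => W) +
      η⁻¹ ^ Fintype.card κ * √(energyOn (tupleSum ψ) (Fintype.piFinset fun _ : ι => W)) := by
  cases nonempty_fintype G
  have hdouble : energyOn (tupleSum fun x => 2 • ψ x) (Fintype.piFinset fun _ : ι => W) =
      energyOn (tupleSum ψ) (Fintype.piFinset fun _ : ι => W) := by
    refine energyOn_congr _ _ fun x _ y _ => ?_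
    simp only [tupleSum, ← smul_sum]
    exact hG.eq_iff
  have hmoment := sum_norm_sum_addChar_pow_le (ι := ι) (fun x => 2 • ψ x) W
  rw [hdouble] at hmoment
  have hcard : (0 : ℝ) < Fintype.card G := mod_cast Fintype.card_pos
  refine le_of_mul_le_mul_left ?_ hcard
  rw [card_mul_energyOn_add_tupleSum (fun x => 2 • ψ x), mul_add, mul_left_comm,
    mul_left_comm _ (_ ^ _), card_mul_energyOn_tupleSum]
  calc _ ≤ ∑ χ : AddChar G ℂ, (η ^ 2 * (‖∑ x ∈ W, χ (ψ x)‖ ^ Fintype.card ι) ^ 2 +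
          η⁻¹ ^ Fintype.card κ * ‖∑ x ∈ W, χ (2 • ψ x)‖ ^ Fintype.card ι) := by
        refine sum_le_sum fun χ _ => ?_
        rw [hικ, pow_mul, ← pow_mul _ _ 2, mul_comm (_ + 2), pow_mul _ 2]
        exact sq_mul_pow_le_add_pow (norm_nonneg _) (by positivity) hη _
    _ ≤ _ := by
        rw [sum_add_distrib, ← mul_sum, ← mul_sum]
        gcongr

end Fourier

section IntegerVectors

/-- Coordinatewise reduction of an integer vector modulo `N`. -/
def reduceVec (κ : Type*) (N : ℕ) : (κ → ℤ) →+ (κ → ZMod N) where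
  toFun v i := (v i : ZMod N)
  map_zero' := by ext; simp
  map_add' v w := by ext; simp

lemma reduceVec_tupleSum {κ α ι : Type*} [Fintype ι] (N : ℕ) (ψ : α → κ → ℤ) (x : ι → α) :
    reduceVec κ N (tupleSum ψ x) = tupleSum (fun t => reduceVec κ N (ψ t)) x :=
  map_sum _ _ _

lemma exists_odd_reduceVec_injOn {κ : Type*} [Finite κ] (S : Finset (κ → ℤ)) :
    ∃ N : ℕ, Odd N ∧ Set.InjOn (reduceVec κ N) S := by
  cases nonempty_fintype κ
  set B : ℕ := ∑ v ∈ S, ∑ i, (v i).natAbs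
  have hB : ∀ v ∈ S, ∀ i, (v i).natAbs ≤ B := fun v hv i =>
    (single_le_sum (f := fun i => (v i).natAbs) (fun _ _ => Nat.zero_le _) (mem_univ i)).trans
    (single_le_sum (f := fun v : κ → ℤ => ∑ i, (v i).natAbs) (fun _ _ => Nat.zero_le _) hv)
  refine ⟨2 * B + 1, odd_two_mul_add_one B, fun v hv w hw h => funext fun i => ?_⟩
  have hdvd : ((2 * B + 1 : ℕ) : ℤ) ∣ w i - v i :=
    (ZMod.intCast_eq_intCast_iff_dvd_sub _ _ _).mp (congrFun h i)
  have hv := hB v hv i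
  have hw := hB w hw i
  have := Int.eq_zero_of_abs_lt_dvd hdvd (by rw [abs_lt]; omega)
  omega

variable {κ : Type*} [Fintype κ]

lemma exists_odd_energyOn_reduceVec {τ : Type*} (φ : τ → κ → ℤ) (A : Finset τ) :
    ∃ N : ℕ, Odd N ∧ ∀ B ⊆ A, energyOn φ B = energyOn (fun x => reduceVec κ N (φ x)) B := by
  classical
  obtain ⟨N, hodd, hN⟩ := exists_odd_reduceVec_injOn (A.image φ)
  refine ⟨N, hodd, fun B hB => energyOn_congr _ _ fun x hx y hy => ?_⟩
  exact (hN.eq_iff (mem_image_of_mem _ (hB hx)) (mem_image_of_mem _ (hB hy))).symm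

lemma two_nsmul_injective_of_odd {κ : Type*} {N : ℕ} (hN : Odd N) :
    Function.Injective fun v : κ → ZMod N => 2 • v := by
  intro v w h
  have h2 : IsUnit (2 : ZMod N) := mod_cast
    (ZMod.isUnit_iff_coprime 2 N).mpr hN.coprime_two_left
  exact funext fun i => h2.mul_left_cancel (by simpa using congrFun h i)

variable {τ α ι : Type*} [Fintype ι] [DecidableEq ι]

lemma exists_energyOn_add_tupleSum_biUnion_le [Nonempty ι] [DecidableEq α] {σ : Type*}
    (Φ : τ → κ → ℤ) (T : Finset τ) (ψ : α → κ → ℤ) {L : Finset σ} (hL : L.Nonempty)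
    {V : σ → Finset α} (hV : (L : Set σ).PairwiseDisjoint V) :
    ∃ a ∈ L, energyOn (fun z : τ × (ι → α) => Φ z.1 + tupleSum ψ z.2)
        (T ×ˢ Fintype.piFinset fun _ => L.biUnion V) ≤
      #L ^ (2 * Fintype.card ι) *
        energyOn (fun z : τ × (ι → α) => Φ z.1 + tupleSum ψ z.2)
          (T ×ˢ Fintype.piFinset fun _ => V a) := by
  set φ : τ × (ι → α) → κ → ℤ := fun z => Φ z.1 + tupleSum ψ z.2
  obtain ⟨N, hodd, hN⟩ := exists_odd_energyOn_reduceVec φ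
    (T ×ˢ Fintype.piFinset fun _ => L.biUnion V)
  have : NeZero N := ⟨hodd.pos.ne'⟩
  have hsub : ∀ a ∈ L, T ×ˢ Fintype.piFinset (fun _ : ι => V a) ⊆
      T ×ˢ Fintype.piFinset fun _ => L.biUnion V := fun a ha =>
    product_subset_product subset_rfl (Fintype.piFinset_subset _ _
      fun _ => subset_biUnion_of_mem V ha)
  have hsum : (energyOn φ (T ×ˢ Fintype.piFinset fun _ => L.biUnion V) : ℝ) ≤
      (#L : ℝ) ^ (2 * Fintype.card ι - 1) *
        ∑ a ∈ L, (energyOn φ (T ×ˢ Fintype.piFinset fun _ => V a) : ℝ) := by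
    rw [hN _ subset_rfl, sum_congr rfl fun a ha => by rw [hN _ (hsub a ha)]]
    simp only [φ, map_add, reduceVec_tupleSum]
    classical
    exact energyOn_add_tupleSum_biUnion_le (fun t => reduceVec κ N (Φ t)) T
      (fun x => reduceVec κ N (ψ x)) hV
  obtain ⟨a, ha, hmax⟩ := L.exists_max_image
    (fun a => energyOn φ (T ×ˢ Fintype.piFinset fun _ => V a)) hL
  refine ⟨a, ha, ?_⟩
  obtain ⟨n, hn⟩ : ∃ n, 2 * Fintype.card ι = n + 1 :=
    ⟨2 * Fintype.card ι - 1, by have := Fintype.card_pos (α := ι); omega⟩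
  rw [hn, Nat.add_sub_cancel] at hsum
  rw [hn, pow_succ, mul_assoc]
  exact (mod_cast hsum : _ ≤ _).trans (Nat.mul_le_mul_left _ (sum_le_card_nsmul _ _ _ hmax))

lemma energyOn_filter_coord_eq_coord_le [DecidableEq α] (ψ : α → κ → ℤ) (W : Finset α) {i j : ι}
    (hij : i ≠ j) {η : ℝ} (hη : 0 < η) :
    (energyOn (tupleSum ψ) {x ∈ Fintype.piFinset fun _ : ι => W | x i = x j} : ℝ) ≤
      η ^ 2 * energyOn (tupleSum ψ) (Fintype.piFinset fun _ : ι => W) +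
      η⁻¹ ^ (Fintype.card ι - 2) *
        √(energyOn (tupleSum ψ) (Fintype.piFinset fun _ : ι => W)) := by
  obtain ⟨N, hodd, hN⟩ := exists_odd_energyOn_reduceVec (tupleSum ψ)
    (Fintype.piFinset fun _ : ι => W)
  have : NeZero N := ⟨hodd.pos.ne'⟩
  have hcard : Fintype.card {l // l ∉ ({i, j} : Finset ι)} = Fintype.card ι - 2 := by
    rw [Fintype.card_subtype_compl, Fintype.card_coe, card_pair hij]
  have hpair : 2 ≤ Fintype.card ι := card_pair hij ▸ card_le_univ {i, j}
  classical
  rw [hN _ subset_rfl, hN _ (filter_subset _ _), ← hcard]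
  simp only [reduceVec_tupleSum]
  set ψ' : α → κ → ZMod N := fun t => reduceVec κ N (ψ t)
  have hcoord := energyOn_filter_coord_eq_coord_le_energyOn ψ' W hij
  exact (Nat.cast_le.mpr hcoord).trans
    (energyOn_two_nsmul_add_tupleSum_le (two_nsmul_injective_of_odd hodd) (by omega) ψ' W hη)

end IntegerVectors

section NonsingularSolutions

open MvPolynomial

/-- The exponents `1, 2, …, n, k` of the system of power sums in `n + 1` unknowns. -/
def sysExp (n k : ℕ) : Fin (n + 1) → ℕ :=
  Fin.snoc (α := fun _ => ℕ) (fun j => j + 1) k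

@[simp] lemma sysExp_castSucc (n k : ℕ) (j : Fin n) : sysExp n k j.castSucc = j + 1 :=
  Fin.snoc_castSucc (α := fun _ => ℕ) ..

@[simp] lemma sysExp_last (n k : ℕ) : sysExp n k (Fin.last n) = k :=
  Fin.snoc_last (α := fun _ => ℕ) ..

/-- The generalised Vandermonde matrix with entries `z i ^ e j`. For `e = sysExp n k - 1` it is,
up to the scalars `sysExp n k j`, the Jacobian of the system with exponents `sysExp n k`. -/
def powerMatrix {ι κ R : Type*} [Monoid R] (e : κ → ℕ) (z : ι → R) : Matrix κ ι R :=
  .of fun j i => z i ^ e j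

lemma esymm_eq_of_psum_eq {σ R : Type*} [Fintype σ] [CommRing R] (t u : σ → R) {n : ℕ}
    (hunit : ∀ j : Fin n, IsUnit ((j + 1 : ℕ) : R))
    (h : ∀ j : Fin n, ∑ i, t i ^ (j + 1 : ℕ) = ∑ i, u i ^ (j + 1 : ℕ)) :
    ∀ j ≤ n, aeval t (esymm σ ℤ j) = aeval u (esymm σ ℤ j) := by
  classical
  intro j
  induction j using Nat.strong_induction_on with
  | _ j ih =>
    intro hj
    obtain _ | j := j
    · simp
    have newton : ∀ v : σ → R, ((j + 1 : ℕ) : R) * aeval v (esymm σ ℤ (j + 1)) =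
        (-1) ^ (j + 1 + 1) * ∑ a ∈ antidiagonal (j + 1) with a.1 < j + 1,
          (-1) ^ a.1 * aeval v (esymm σ ℤ a.1) * ∑ i, v i ^ a.2 := by
      intro v
      have := congrArg (aeval v) (mul_esymm_eq_sum σ ℤ (j + 1))
      simpa [psum, map_sum] using this
    refine (hunit ⟨j, hj⟩).mul_left_cancel ?_
    rw [newton t, newton u]
    congr 1
    refine sum_congr rfl fun a ha => ?_
    obtain ⟨hsum, hlt⟩ := mem_filter.mp ha
    obtain ⟨l, hl⟩ := Nat.exists_eq_add_of_lt hlt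
    have ha2 : a.2 = l + 1 := by have := mem_antidiagonal.mp hsum; omega
    rw [ih a.1 hlt (by omega), ha2, h ⟨l, by omega⟩]

lemma card_le_pow_of_esymm_eq {m : ℕ} {F : Type*} [CommRing F] [IsDomain F]
    {T : Finset (Fin m → F)} {e : ℕ → F}
    (h : ∀ t ∈ T, ∀ j ≤ m, aeval t (esymm (Fin m) ℤ j) = e j) : #T ≤ m ^ m := by
  classical
  rcases T.eq_empty_or_nonempty with rfl | ⟨t₀, ht₀⟩
  · simp
  have hprod : ∀ t ∈ T, ∏ i, (Polynomial.X - Polynomial.C (t i)) =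
      ∑ j ∈ range (m + 1), (-1) ^ j * (Polynomial.C (e j) * Polynomial.X ^ (m - j)) := by
    intro t ht
    have hvieta := Multiset.prod_X_sub_X_eq_sum_esymm (univ.val.map t)
    rw [Multiset.map_map] at hvieta
    simp only [Multiset.card_map, card_val, card_univ, Fintype.card_fin] at hvieta
    refine hvieta.trans (sum_congr rfl fun j hj => ?_)
    rw [← aeval_esymm_eq_multiset_esymm (Fin m) ℤ, h t ht j (mem_range_succ_iff.mp hj)]
  have hsub : T ⊆ Fintype.piFinset fun _ => univ.image t₀ := by
    refine fun t ht => Fintype.mem_piFinset.mpr fun i => ?_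
    have heval := congrArg (Polynomial.eval (t i)) ((hprod t ht).trans (hprod t₀ ht₀).symm)
    rw [Polynomial.eval_prod, Polynomial.eval_prod, prod_eq_zero (mem_univ i) (by simp)] at heval
    obtain ⟨l, -, hl⟩ := prod_eq_zero_iff.mp heval.symm
    simp only [Polynomial.eval_sub, Polynomial.eval_X, Polynomial.eval_C, sub_eq_zero] at hl
    exact mem_image.mpr ⟨l, mem_univ _, hl.symm⟩
  have himage : #(univ.image t₀) ≤ m := by simpa using card_image_le (s := univ) (f := t₀)
  refine (card_le_card hsub).trans ?_
  simpa [Fintype.card_piFinset_const] using Nat.pow_le_pow_left himage m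

/-- The polynomial expressing the `j`-th power sum in `n` variables through the elementary
symmetric functions of degrees `1, …, n`. -/
noncomputable def psumPoly (n j : ℕ) : MvPolynomial (Fin n) ℤ :=
  (esymmAlgEquiv (Fin n) ℤ (Fintype.card_fin n)).symm
    ⟨psum (Fin n) ℤ j, psum_isSymmetric (Fin n) ℤ j⟩

lemma aeval_psumPoly {n : ℕ} {R : Type*} [CommRing R] (j : ℕ) (x : Fin n → R) :
    aeval (fun i : Fin n => aeval x (esymm (Fin n) ℤ (i + 1))) (psumPoly n j) =
      ∑ i, x i ^ j := by
  have h := congrArg (fun P : symmetricSubalgebra (Fin n) ℤ => aeval x (P : MvPolynomial _ ℤ))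
    ((esymmAlgEquiv (Fin n) ℤ (Fintype.card_fin n)).apply_symm_apply
      ⟨psum (Fin n) ℤ j, psum_isSymmetric (Fin n) ℤ j⟩)
  rw [← psumPoly] at h
  simp only [esymmAlgEquiv_apply, esymmAlgHom_apply] at h
  rw [← AlgHom.comp_apply, comp_aeval] at h
  simpa [psum] using h

/-- The `k`-th power sum in `n + 1` variables as a polynomial in the top elementary symmetric
function, the lower elementary symmetric functions having the values `e`. -/
noncomputable def fiberPoly {n : ℕ} {F : Type*} [CommRing F] (k : ℕ) (e : Fin n → F) :
    Polynomial F :=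
  aeval (Fin.snoc (α := fun _ => Polynomial F) (fun i => Polynomial.C (e i)) Polynomial.X)
    (psumPoly (n + 1) k)

lemma aeval_fiberPoly {n : ℕ} {F R : Type*} [CommRing F] [CommRing R] [Algebra F R] (k : ℕ)
    {e : Fin n → F} {x : Fin (n + 1) → R}
    (hx : ∀ i : Fin n, aeval x (esymm (Fin (n + 1)) ℤ (i + 1)) = algebraMap F R (e i)) :
    Polynomial.aeval (aeval x (esymm (Fin (n + 1)) ℤ (n + 1))) (fiberPoly k e) =
      ∑ i, x i ^ k := by
  set E := aeval x (esymm (Fin (n + 1)) ℤ (n + 1)) with hE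
  rw [← aeval_psumPoly]
  refine (comp_aeval_apply (R := ℤ) _
    ((Polynomial.aeval E : Polynomial F →ₐ[F] R) : Polynomial F →+* R).toIntAlgHom _).trans ?_
  congr 2
  funext i
  refine Fin.lastCases ?_ (fun i => ?_) i
  · simp [hE]
  · simp [hx]

lemma natDegree_fiberPoly_le {n : ℕ} {F : Type*} [CommRing F] [Nontrivial F] (k : ℕ)
    (e : Fin n → F) : (fiberPoly k e).natDegree ≤ (psumPoly (n + 1) k).totalDegree := by
  rw [fiberPoly, ← aeval_map_algebraMap F]
  refine (aeval_natDegree_le (n := 1) _ (sup_mono (support_map_subset _ _)) _ fun i => ?_).trans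
    (mul_one _).le
  refine Fin.lastCases ?_ (fun i => ?_) i
  · simp
  · simp

lemma sum_dualNumber_pow {ι F : Type*} [Fintype ι] [CommRing F] (t ξ : ι → F) (j : ℕ) :
    ∑ i, (TrivSqZeroExt.inl (t i) + TrivSqZeroExt.inr (ξ i) : DualNumber F) ^ j =
      TrivSqZeroExt.inl (∑ i, t i ^ j) + TrivSqZeroExt.inr (j * ∑ i, t i ^ (j - 1) * ξ i) := by
  ext
  · simp [TrivSqZeroExt.fst_sum]
  · simp [TrivSqZeroExt.snd_sum, TrivSqZeroExt.snd_pow, mul_sum]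

lemma exists_ne_zero_sum_pow_mul_eq_zero {n : ℕ} {F : Type*} [Field F] (t : Fin (n + 1) → F) :
    ∃ ξ : Fin (n + 1) → F, ξ ≠ 0 ∧ ∀ j : Fin n, ∑ i, t i ^ (j : ℕ) * ξ i = 0 := by
  obtain ⟨ξ, hξ, hξ0⟩ := (Submodule.ne_bot_iff _).mp <|
    (powerMatrix (fun j : Fin n => (j : ℕ)) t).mulVecLin.ker_ne_bot_of_finrank_lt (by simp)
  exact ⟨ξ, hξ0, congrFun (LinearMap.mem_ker.mp hξ)⟩

-- If the fibre polynomial were constant, then the `k`-th power sum would be stationary along the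
-- tangent direction `ξ` of the fibre of the lower power sums, so `ξ` would be in the kernel of the
-- Jacobian.
lemma fiberPoly_ne_C {n k : ℕ} {F : Type*} [Field F] {t : Fin (n + 1) → F}
    (he : ∀ j, (sysExp n k j : F) ≠ 0)
    (hdet : (powerMatrix (fun j => sysExp n k j - 1) t).det ≠ 0) (d : F) :
    fiberPoly k (fun i : Fin n => aeval t (esymm (Fin (n + 1)) ℤ (i + 1))) ≠ Polynomial.C d := by
  intro hconst
  obtain ⟨ξ, hξ0, hξ⟩ := exists_ne_zero_sum_pow_mul_eq_zero t
  set x : Fin (n + 1) → DualNumber F := fun i => TrivSqZeroExt.inl (t i) + TrivSqZeroExt.inr (ξ i)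
  have hpsum : ∀ j : Fin n, ∑ i, x i ^ (j + 1 : ℕ) =
      ∑ i, algebraMap F (DualNumber F) (t i) ^ (j + 1 : ℕ) := by
    intro j
    rw [sum_dualNumber_pow, Nat.add_sub_cancel, hξ, mul_zero, TrivSqZeroExt.inr_zero, add_zero]
    simp only [← map_pow, ← map_sum]
    rfl
  have hunit : ∀ j : Fin n, IsUnit ((j + 1 : ℕ) : DualNumber F) := fun j => by
    have hj := (he j.castSucc).isUnit.map (algebraMap F (DualNumber F))
    rwa [sysExp_castSucc, map_natCast] at hj
  have hsum := aeval_fiberPoly (R := DualNumber F) k (x := x) fun i =>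
    (esymm_eq_of_psum_eq x (fun i => algebraMap F (DualNumber F) (t i)) hunit hpsum _
      (by omega)).trans
        (comp_aeval_apply (R := ℤ) t (algebraMap F (DualNumber F)).toIntAlgHom _).symm
  rw [hconst, Polynomial.aeval_C, sum_dualNumber_pow] at hsum
  have hk : (k : F) ≠ 0 := by simpa using he (Fin.last n)
  have hlast : ∑ i, t i ^ (k - 1) * ξ i = 0 := by
    simpa [TrivSqZeroExt.algebraMap_eq_inl', hk] using (congrArg TrivSqZeroExt.snd hsum).symm
  refine hdet (Matrix.exists_mulVec_eq_zero_iff.mp ⟨ξ, hξ0, funext fun j => ?_⟩)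
  refine Fin.lastCases ?_ (fun j => ?_) j
  · simpa [Matrix.mulVec, dotProduct, powerMatrix] using hlast
  · simpa [Matrix.mulVec, dotProduct, powerMatrix] using hξ j

/-- A bound, independent of the field, for the number of nonsingular solutions of a system with
exponents `sysExp n k` in `n + 1` unknowns. -/
noncomputable def nonsingularBound (n k : ℕ) : ℕ :=
  (n + 1) ^ (n + 1) * (psumPoly (n + 1) k).totalDegree

lemma card_le_nonsingularBound {n k : ℕ} {F : Type*} [Field F] {c : Fin (n + 1) → F}
    {T : Finset (Fin (n + 1) → F)} (he : ∀ j, (sysExp n k j : F) ≠ 0)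
    (hT : ∀ t ∈ T, ∀ j, ∑ i, t i ^ sysExp n k j = c j)
    (hdet : ∀ t ∈ T, (powerMatrix (fun j => sysExp n k j - 1) t).det ≠ 0) :
    #T ≤ nonsingularBound n k := by
  classical
  rcases T.eq_empty_or_nonempty with rfl | ⟨t₀, ht₀⟩
  · simp
  set e : Fin n → F := fun i => aeval t₀ (esymm (Fin (n + 1)) ℤ (i + 1))
  set d : F := c (Fin.last n)
  have hesymm : ∀ t ∈ T, ∀ j ≤ n,
      aeval t (esymm (Fin (n + 1)) ℤ j) = aeval t₀ (esymm (Fin (n + 1)) ℤ j) := fun t ht =>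
    esymm_eq_of_psum_eq t t₀ (fun j => by simpa using (he j.castSucc).isUnit) fun j => by
      simpa using (hT t ht j.castSucc).trans (hT t₀ ht₀ j.castSucc).symm
  have hne : fiberPoly k e - Polynomial.C d ≠ 0 :=
    sub_ne_zero.mpr (fiberPoly_ne_C he (hdet t₀ ht₀) d)
  set I := T.image fun t => aeval t (esymm (Fin (n + 1)) ℤ (n + 1))
  have hroots : I ⊆ (fiberPoly k e - Polynomial.C d).roots.toFinset := by
    refine image_subset_iff.mpr fun t ht => ?_
    have hsum := aeval_fiberPoly (R := F) k (e := e) fun i => hesymm t ht _ (by omega)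
    rw [Multiset.mem_toFinset, Polynomial.mem_roots hne, Polynomial.IsRoot, Polynomial.eval_sub,
      Polynomial.eval_C, ← Polynomial.coe_aeval_eq_eval, hsum, sub_eq_zero]
    simpa using hT t ht (Fin.last n)
  have hfibre : ∀ E, #{t ∈ T | aeval t (esymm (Fin (n + 1)) ℤ (n + 1)) = E} ≤
      (n + 1) ^ (n + 1) := by
    refine fun E => card_le_pow_of_esymm_eq
      (e := fun j => if j ≤ n then aeval t₀ (esymm (Fin (n + 1)) ℤ j) else E) fun t ht j hj => ?_
    obtain ⟨htT, htE⟩ := mem_filter.mp ht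
    split_ifs with hjn
    · exact hesymm t htT j hjn
    · obtain rfl : j = n + 1 := by omega
      exact htE
  refine (card_le_mul_card_image T _ fun E _ => hfibre E).trans (Nat.mul_le_mul_left _ ?_)
  calc #I ≤ _ := card_le_card hroots
    _ ≤ _ := Multiset.toFinset_card_le _
    _ ≤ _ := Polynomial.card_roots' _
    _ ≤ _ := by
      rw [Polynomial.natDegree_sub_C]
      exact natDegree_fiberPoly_le k e

end NonsingularSolutions

section Determinant

lemma card_support_sum_monomial_le {ι R : Type*} [Fintype ι] [Semiring R] (e : ι → ℕ) (v : ι → R) :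
    #(∑ j, Polynomial.monomial (e j) (v j)).support ≤ Fintype.card ι := by
  have hsub : (∑ j, Polynomial.monomial (e j) (v j)).support ⊆ univ.image e := by
    intro l hl
    by_contra hne
    refine Polynomial.mem_support_iff.mp hl ?_
    rw [Polynomial.finsetSum_coeff]
    refine sum_eq_zero fun j _ => Polynomial.coeff_monomial_of_ne _ ?_
    rintro rfl
    exact hne (mem_image_of_mem e (mem_univ j))
  exact (card_le_card hsub).trans card_image_le

lemma powerMatrix_comp_ringHom {ι κ R S : Type*} [CommRing R] [CommRing S] (f : R →+* S)
    (e : κ → ℕ) (z : ι → R) : powerMatrix e (fun i => f (z i)) = (powerMatrix e z).map f := by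
  ext j i
  simp [powerMatrix]

variable {ι : Type*} [Fintype ι] [DecidableEq ι]

lemma signVariations_lt_card_support {R : Type*} [Ring R] [LinearOrder R] [IsStrictOrderedRing R]
    {P : Polynomial R} (hP : P ≠ 0) : P.signVariations < #P.support := by
  induction hn : #P.support using Nat.strong_induction_on generalizing P with
  | _ n ih =>
    by_cases h0 : P.eraseLead = 0
    · have hmonomial : P = Polynomial.monomial P.natDegree P.leadingCoeff := by
        simpa [h0] using P.eraseLead_add_monomial_natDegree_leadingCoeff.symm
      rw [hmonomial, Polynomial.signVariations_monomial, ← hn]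
      simpa [card_pos] using hP
    · have hlt := Polynomial.eraseLead_support_card_lt hP
      have hlead := ih _ (hn ▸ hlt) h0 rfl
      have := Polynomial.signVariations_le_eraseLead_succ P
      omega

-- A row relation is a polynomial with at most `card ι` terms and `card ι` distinct positive roots,
-- which Descartes' rule of signs excludes.
lemma det_powerMatrix_ne_zero {R : Type*} [CommRing R] [LinearOrder R] [IsStrictOrderedRing R]
    {e : ι → ℕ} (he : Function.Injective e) {z : ι → R} (hz : Function.Injective z)
    (hpos : ∀ i, 0 < z i) : (powerMatrix e z).det ≠ 0 := by
  intro hdet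
  obtain ⟨v, hv0, hv⟩ := Matrix.exists_vecMul_eq_zero_iff.mpr hdet
  set P : Polynomial R := ∑ j, Polynomial.monomial (e j) (v j) with hP
  have hcoeff : ∀ j, P.coeff (e j) = v j := fun j => by
    rw [hP, Polynomial.finsetSum_coeff, sum_eq_single j]
    · simp
    · intro l _ hl
      rw [Polynomial.coeff_monomial, if_neg (he.ne hl)]
    · simp
  have hP0 : P ≠ 0 := fun h0 => hv0 <| funext fun j => by
    rw [← hcoeff j, h0, Polynomial.coeff_zero, Pi.zero_apply]
  have hroot : ∀ i, P.eval (z i) = 0 := fun i => by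
    simpa [Matrix.vecMul, dotProduct, hP, Polynomial.eval_finsetSum, powerMatrix]
      using congrFun hv i
  have hcount : Fintype.card ι ≤ P.roots.countP (0 < ·) := by
    have hle : (univ.image z).val ≤ P.roots.filter (0 < ·) := by
      rw [Multiset.le_iff_subset (nodup _)]
      intro t ht
      obtain ⟨i, -, rfl⟩ := mem_image.mp (mem_val.mp ht)
      exact Multiset.mem_filter.mpr ⟨(Polynomial.mem_roots hP0).mpr (hroot i), hpos i⟩
    have := Multiset.card_le_card hle
    rwa [card_val, card_image_of_injective _ hz, card_univ, ← Multiset.countP_eq_card_filter]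
      at this
  have hdescartes := Polynomial.roots_countP_pos_le_signVariations (P := P)
  have hvar := signVariations_lt_card_support hP0
  have hsupp : #P.support ≤ Fintype.card ι := card_support_sum_monomial_le e v
  omega

lemma abs_det_powerMatrix_le {e : ι → ℕ} {z : ι → ℤ} {B : ℤ} {K : ℕ} (hB : 1 ≤ B)
    (he : ∀ j, e j ≤ K) (hz : ∀ i, |z i| ≤ B) :
    |(powerMatrix e z).det| ≤ (Fintype.card ι).factorial * B ^ (K * Fintype.card ι) := by
  have := Matrix.det_le (A := powerMatrix e z) (abv := AbsoluteValue.abs) (x := B ^ K)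
    fun j i => by
      simp only [powerMatrix, Matrix.of_apply, AbsoluteValue.abs_apply, abs_pow]
      exact (pow_le_pow_left₀ (abs_nonneg _) (hz i) _).trans (pow_le_pow_right₀ hB (he j))
  simpa [pow_mul, nsmul_eq_mul] using this

lemma dvd_of_dvd_mulVec {R : Type*} [CommRing R] {p : R} (hp : Prime p) {M : Matrix ι ι R}
    (hdet : ¬ p ∣ M.det) {δ : ι → R} (h : ∀ j, p ∣ M.mulVec δ j) (i : ι) : p ∣ δ i := by
  have hadj : M.adjugate.mulVec (M.mulVec δ) i = M.det * δ i := by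
    rw [Matrix.mulVec_mulVec, Matrix.adjugate_mul, Matrix.smul_mulVec, Matrix.one_mulVec]
    rfl
  refine (hp.dvd_or_dvd ?_).resolve_left hdet
  rw [← hadj]
  exact dvd_sum fun j _ => (h j).mul_left _

end Determinant

section HenselLifting

variable {ι : Type*} [Fintype ι] [DecidableEq ι]

lemma dvd_of_pow_succ_dvd_sum_pow_sub {p : ℤ} (hp : Prime p) {e : ι → ℕ}
    (he : ∀ j, ¬ p ∣ (e j : ℤ)) {y : ι → ℤ}
    (hdet : ¬ p ∣ (powerMatrix (fun j => e j - 1) y).det) {t : ℕ} (ht : 1 ≤ t) {δ : ι → ℤ}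
    (h : ∀ j, p ^ (t + 1) ∣ ∑ i, (y i + p ^ t * δ i) ^ e j - ∑ i, y i ^ e j) (i : ι) :
    p ∣ δ i := by
  refine dvd_of_dvd_mulVec hp hdet (fun j => ?_) i
  have htaylor : ∀ i, p ^ (t + 1) ∣ ((y i + p ^ t * δ i) ^ e j - y i ^ e j) -
      p ^ t * (e j * (y i ^ (e j - 1) * δ i)) := by
    intro i
    obtain ⟨c, hc⟩ := Polynomial.powAddExpansion (y i) (p ^ t * δ i) (e j)
    rw [hc, show y i ^ e j + e j * y i ^ (e j - 1) * (p ^ t * δ i) + c * (p ^ t * δ i) ^ 2 -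
      y i ^ e j - p ^ t * (e j * (y i ^ (e j - 1) * δ i)) = p ^ (t * 2) * (c * δ i ^ 2) by ring]
    exact (pow_dvd_pow p (by omega)).mul_right _
  have hlinear : p ^ (t + 1) ∣ p ^ t * (e j * ∑ i, y i ^ (e j - 1) * δ i) := by
    have := dvd_sub (h j) (dvd_sum fun i (_ : i ∈ univ) => htaylor i)
    rwa [sum_sub_distrib, sum_sub_distrib, sub_sub_cancel, ← mul_sum, ← mul_sum] at this
  rw [pow_succ, mul_dvd_mul_iff_left (pow_ne_zero t hp.ne_zero)] at hlinear
  exact (hp.dvd_or_dvd hlinear).resolve_left (he j)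

lemma pow_dvd_sub_of_pow_dvd_sum_pow_sub {p : ℤ} (hp : Prime p) {N : ℕ} {e : ι → ℕ}
    (he : ∀ j, ¬ p ∣ (e j : ℤ)) {x y : ι → ℤ}
    (hdet : ¬ p ∣ (powerMatrix (fun j => e j - 1) y).det) (hxy : ∀ i, p ∣ x i - y i)
    (h : ∀ j, p ^ N ∣ ∑ i, x i ^ e j - ∑ i, y i ^ e j) (i : ι) : p ^ N ∣ x i - y i := by
  suffices hlift : ∀ t, 1 ≤ t → t ≤ N → ∀ i, p ^ t ∣ x i - y i by
    rcases Nat.eq_zero_or_pos N with rfl | hN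
    · simp
    · exact hlift N hN le_rfl i
  intro t ht
  induction t, ht using Nat.le_induction with
  | base => intro _; simpa using hxy
  | succ t ht ih =>
    intro htN i
    choose δ hδ using ih (by omega)
    have hx : x = fun i => y i + p ^ t * δ i := funext fun i => by linear_combination hδ i
    rw [hδ i, pow_succ]
    refine mul_dvd_mul_left _ (dvd_of_pow_succ_dvd_sum_pow_sub hp he hdet ht (fun j => ?_) i)
    simpa only [hx] using (pow_dvd_pow p htN).trans (h j)

lemma card_le_nonsingularBound_of_pow_dvd {n k p N : ℕ} (hp : p.Prime) (hN : N ≠ 0)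
    (he : ∀ j, ¬ p ∣ sysExp n k j) {R : Finset (Fin (n + 1) → ℤ)}
    (hinj : ∀ x ∈ R, ∀ y ∈ R, (∀ i, (p : ℤ) ^ N ∣ x i - y i) → x = y)
    (hpow : ∀ x ∈ R, ∀ y ∈ R, ∀ j,
      (p : ℤ) ^ N ∣ ∑ i, x i ^ sysExp n k j - ∑ i, y i ^ sysExp n k j)
    (hdet : ∀ x ∈ R, ¬ (p : ℤ) ∣ (powerMatrix (fun j => sysExp n k j - 1) x).det) :
    #R ≤ nonsingularBound n k := by
  classical
  have : Fact p.Prime := ⟨hp⟩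
  set red : (Fin (n + 1) → ℤ) → Fin (n + 1) → ZMod p := fun x i => Int.castRingHom (ZMod p) (x i)
  have hred : Set.InjOn red R := fun x hx y hy hxy => hinj x hx y hy <|
    pow_dvd_sub_of_pow_dvd_sum_pow_sub (Nat.prime_iff_prime_int.mp hp)
      (fun j => mod_cast he j) (hdet y hy)
      (fun i => (ZMod.intCast_eq_intCast_iff_dvd_sub _ _ _).mp (congrFun hxy i).symm)
      (hpow x hx y hy)
  rcases R.eq_empty_or_nonempty with rfl | ⟨x₀, hx₀⟩
  · simp
  rw [← card_image_of_injOn hred]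
  refine card_le_nonsingularBound (c := fun j => ∑ i, red x₀ i ^ sysExp n k j) (fun j => ?_) ?_ ?_
  · rw [Ne, ZMod.natCast_eq_zero_iff]
    exact he j
  · refine forall_mem_image.mpr fun x hx j => ?_
    have := (ZMod.intCast_eq_intCast_iff_dvd_sub _ _ _).mpr
      ((dvd_pow_self (p : ℤ) hN).trans (hpow x₀ hx₀ x hx j))
    simpa [red] using this
  · refine forall_mem_image.mpr fun x hx => ?_
    rw [powerMatrix_comp_ringHom, ← RingHom.mapMatrix_apply, ← RingHom.map_det, eq_intCast, Ne,
      ZMod.intCast_zmod_eq_zero_iff_dvd]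
    exact hdet x hx

end HenselLifting

section RegularTuples

variable {ι α κ : Type*} [Fintype ι] [DecidableEq ι] [DecidableEq α]

/-- The tuples from `W` with distinct coordinates, all of them different from `c`. -/
def regularTuples (ι : Type*) [Fintype ι] [DecidableEq ι] (W : Finset α) (c : α) :
    Finset (ι → α) :=
  {x ∈ Fintype.piFinset fun _ => W | Function.Injective x ∧ ∀ i, x i ≠ c}

lemma mem_regularTuples {W : Finset α} {c : α} {x : ι → α} :
    x ∈ regularTuples ι W c ↔
      (∀ i, x i ∈ W) ∧ Function.Injective x ∧ ∀ i, x i ≠ c := by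
  simp [regularTuples]

/-- A size of `W` beyond which `regularTuples ι W c` carries a positive proportion of the energy of
all the tuples of length `s` from `W`. -/
noncomputable def regularThreshold (s : ℕ) : ℝ :=
  12 * (s : ℝ) ^ 2 + (12 * (s : ℝ) ^ 4 * (6 * (s : ℝ) ^ 2) ^ (s - 2)) ^ 2

lemma regularThreshold_nonneg (s : ℕ) : 0 ≤ regularThreshold s := by
  rw [regularThreshold]
  positivity

lemma regularTuples_nonempty [Nonempty ι] {W : Finset α} (c : α)
    (hW : regularThreshold (Fintype.card ι) ≤ #W) : (regularTuples ι W c).Nonempty := by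
  have hsize : 12 * Fintype.card ι ^ 2 ≤ #W := by
    exact_mod_cast (le_add_of_nonneg_right (sq_nonneg _)).trans hW
  have hι : 1 ≤ Fintype.card ι := Fintype.card_pos
  have hcard : Fintype.card ι ≤ Fintype.card (W.erase c) := by
    have := pred_card_le_card_erase (s := W) (a := c)
    rw [Fintype.card_coe]
    nlinarith [Nat.sub_add_cancel (hι.trans (by nlinarith : _ ≤ #W))]
  obtain ⟨f⟩ := Function.Embedding.nonempty_of_card_le hcard
  exact ⟨fun i => f i, mem_regularTuples.mpr ⟨fun i => mem_of_mem_erase (f i).2,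
    Subtype.val_injective.comp f.injective, fun i => ne_of_mem_erase (f i).2⟩⟩

lemma card_mul_energyOn_filter_exists_coord_eq_le {Γ : Type*} [AddCommGroup Γ] [DecidableEq Γ]
    (ψ : α → Γ) (W : Finset α) (c : α) :
    #W * energyOn (tupleSum ψ) {x ∈ Fintype.piFinset fun _ : ι => W | ∃ i, x i = c} ≤
      Fintype.card ι ^ 2 * energyOn (tupleSum ψ) (Fintype.piFinset fun _ : ι => W) := by
  have hcover := energyOn_le_of_subset_biUnion (tupleSum ψ)
    (A := {x ∈ Fintype.piFinset fun _ : ι => W | ∃ i, x i = c}) (L := univ)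
    (B := fun i => {x ∈ Fintype.piFinset fun _ : ι => W | x i = c})
    fun x hx => by simpa using hx
  calc _ ≤ #W * (#univ * ∑ i, energyOn (tupleSum ψ)
            {x ∈ Fintype.piFinset fun _ : ι => W | x i = c}) := Nat.mul_le_mul_left _ hcover
    _ = Fintype.card ι * ∑ i, #W * energyOn (tupleSum ψ)
            {x ∈ Fintype.piFinset fun _ : ι => W | x i = c} := by
        rw [card_univ, ← mul_sum]; ring
    _ ≤ Fintype.card ι * (Fintype.card ι *
          energyOn (tupleSum ψ) (Fintype.piFinset fun _ : ι => W)) := by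
        refine Nat.mul_le_mul_left _ ((sum_le_card_nsmul _ _ _ fun i _ =>
          card_mul_energyOn_filter_coord_eq_le ψ W c i).trans_eq ?_)
        rw [card_univ, smul_eq_mul]
    _ = _ := by ring

variable [Fintype κ]

lemma energyOn_filter_not_injective_le (ψ : α → κ → ℤ) (W : Finset α) {η : ℝ} (hη : 0 < η) :
    (energyOn (tupleSum ψ) {x ∈ Fintype.piFinset fun _ : ι => W | ¬ Function.Injective x} : ℝ) ≤
      Fintype.card ι ^ 4 *
        (η ^ 2 * energyOn (tupleSum ψ) (Fintype.piFinset fun _ : ι => W) +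
          η⁻¹ ^ (Fintype.card ι - 2) *
            √(energyOn (tupleSum ψ) (Fintype.piFinset fun _ : ι => W))) := by
  set M := η ^ 2 * energyOn (tupleSum ψ) (Fintype.piFinset fun _ : ι => W) +
    η⁻¹ ^ (Fintype.card ι - 2) * √(energyOn (tupleSum ψ) (Fintype.piFinset fun _ : ι => W))
  have hcover := energyOn_le_of_subset_biUnion (tupleSum ψ)
    (A := {x ∈ Fintype.piFinset fun _ : ι => W | ¬ Function.Injective x})
    (L := (univ : Finset ι).offDiag)
    (B := fun ij => {x ∈ Fintype.piFinset fun _ : ι => W | x ij.1 = x ij.2}) fun x hx => by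
      obtain ⟨hxW, hx⟩ := mem_filter.mp hx
      obtain ⟨i, j, hxij, hij⟩ := Function.not_injective_iff.mp hx
      exact mem_biUnion.mpr ⟨(i, j), by simpa using hij, mem_filter.mpr ⟨hxW, hxij⟩⟩
  have hpair : ∑ ij ∈ (univ : Finset ι).offDiag, (energyOn (tupleSum ψ)
      {x ∈ Fintype.piFinset fun _ : ι => W | x ij.1 = x ij.2} : ℝ) ≤
      #(univ : Finset ι).offDiag * M :=
    (sum_le_card_nsmul _ _ _ fun ij hij => energyOn_filter_coord_eq_coord_le ψ W
      (mem_offDiag.mp hij).2.2 hη).trans_eq (nsmul_eq_mul ..)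
  have hcard : (#(univ : Finset ι).offDiag : ℝ) ≤ Fintype.card ι ^ 2 := by
    rw [offDiag_card, card_univ, sq]
    exact_mod_cast Nat.sub_le _ _
  calc _ ≤ (#(univ : Finset ι).offDiag : ℝ) * ∑ ij ∈ (univ : Finset ι).offDiag,
          (energyOn (tupleSum ψ) {x ∈ Fintype.piFinset fun _ : ι => W | x ij.1 = x ij.2} : ℝ) :=
        mod_cast hcover
    _ ≤ (Fintype.card ι ^ 2 : ℝ) * (Fintype.card ι ^ 2 * M) :=
        mul_le_mul hcard (hpair.trans (by gcongr)) (by positivity) (by positivity)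
    _ = _ := by ring

lemma energyOn_le_three_mul_regular (ψ : α → κ → ℤ) (W : Finset α) (c : α) :
    energyOn (tupleSum ψ) (Fintype.piFinset fun _ : ι => W) ≤
      3 * (energyOn (tupleSum ψ) (regularTuples ι W c) +
        energyOn (tupleSum ψ) {x ∈ Fintype.piFinset fun _ : ι => W | ∃ i, x i = c} +
        energyOn (tupleSum ψ)
          {x ∈ Fintype.piFinset fun _ : ι => W | ¬ Function.Injective x}) := by
  refine (energyOn_le_of_subset_biUnion (tupleSum ψ) (L := univ)
    (B := ![regularTuples ι W c, {x ∈ Fintype.piFinset fun _ : ι => W | ∃ i, x i = c},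
      {x ∈ Fintype.piFinset fun _ : ι => W | ¬ Function.Injective x}]) fun x hx => ?_).trans_eq ?_
  · rw [mem_biUnion]
    by_cases hc : ∃ i, x i = c
    · exact ⟨1, mem_univ _, mem_filter.mpr ⟨hx, hc⟩⟩
    by_cases hinj : Function.Injective x
    · exact ⟨0, mem_univ _, mem_filter.mpr ⟨hx, hinj, not_exists.mp hc⟩⟩
    · exact ⟨2, mem_univ _, mem_filter.mpr ⟨hx, hinj⟩⟩
  · simp [Fin.sum_univ_three]

lemma energyOn_le_twelve_mul_regular [Nonempty ι] (ψ : α → κ → ℤ) {W : Finset α} (c : α)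
    (hW : regularThreshold (Fintype.card ι) ≤ #W) :
    energyOn (tupleSum ψ) (Fintype.piFinset fun _ : ι => W) ≤
      12 * energyOn (tupleSum ψ) (regularTuples ι W c) := by
  have hsplit := energyOn_le_three_mul_regular (ι := ι) ψ W c
  have hcoord := card_mul_energyOn_filter_exists_coord_eq_le (ι := ι) ψ W c
  have hWE : #W ≤ energyOn (tupleSum ψ) (Fintype.piFinset fun _ : ι => W) :=
    (Nat.le_self_pow Fintype.card_ne_zero _).trans <| by
      simpa using card_le_energyOn (tupleSum ψ) (Fintype.piFinset fun _ : ι => W)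
  have hcard : 1 ≤ (Fintype.card ι : ℝ) := mod_cast Fintype.card_pos (α := ι)
  have hdiag := energyOn_filter_not_injective_le (ι := ι) ψ W
    (η := (6 * (Fintype.card ι : ℝ) ^ 2)⁻¹) (by positivity)
  rw [inv_inv] at hdiag
  rify at hsplit hcoord hWE ⊢
  set E : ℝ := (energyOn (tupleSum ψ) (Fintype.piFinset fun _ : ι => W) : ℝ)
  set s : ℝ := (Fintype.card ι : ℝ)
  set Q : ℝ := (6 * s ^ 2) ^ (Fintype.card ι - 2)
  rw [regularThreshold] at hW
  have hcoord' : 12 * (energyOn (tupleSum ψ)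
      {x ∈ Fintype.piFinset fun _ : ι => W | ∃ i, x i = c} : ℝ) ≤ E := by
    have hWlb : 12 * s ^ 2 ≤ #W := (le_add_of_nonneg_right (sq_nonneg _)).trans hW
    refine le_of_mul_le_mul_left ?_ (by positivity : (0 : ℝ) < s ^ 2)
    refine le_trans ?_ hcoord
    rw [← mul_assoc, mul_comm (s ^ 2)]
    gcongr
  have hsqrt : 12 * s ^ 4 * Q ≤ √E :=
    Real.le_sqrt_of_sq_le <| ((le_add_of_nonneg_left (by positivity)).trans hW).trans hWE
  have hdiag' : s ^ 4 * ((6 * s ^ 2)⁻¹ ^ 2 * E + Q * √E) ≤ E / 36 + E / 12 := by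
    have hlarge : s ^ 4 * ((6 * s ^ 2)⁻¹ ^ 2 * E) = E / 36 := by field_simp; ring
    have hsmall := mul_le_mul_of_nonneg_right hsqrt (Real.sqrt_nonneg E)
    rw [Real.mul_self_sqrt (Nat.cast_nonneg _)] at hsmall
    rw [mul_add, hlarge]
    linarith
  linarith [(Nat.cast_nonneg _ : (0 : ℝ) ≤ energyOn (tupleSum ψ) (regularTuples ι W c))]

end RegularTuples

section LinearFunctional

variable (Λ : (ℤ → ℤ) →ₗ[ℤ] ℤ)

lemma map_affine_pow (c d : ℤ) (n : ℕ) :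
    Λ (fun t => (c * t + d) ^ n) =
      ∑ l ∈ range (n + 1), (n.choose l : ℤ) * c ^ l * d ^ (n - l) * Λ (fun t => t ^ l) := by
  have hbinomial : (fun t : ℤ => (c * t + d) ^ n) = ∑ l ∈ range (n + 1),
      ((n.choose l : ℤ) * c ^ l * d ^ (n - l)) • fun t : ℤ => t ^ l := by
    funext t
    simp only [Finset.sum_apply, Pi.smul_apply, smul_eq_mul, add_pow, mul_pow]
    exact sum_congr rfl fun l _ => by ring
  rw [hbinomial, map_sum]
  simp only [map_smul, smul_eq_mul]

variable {Λ}

lemma map_pow_eq_zero_of_affine {p : ℤ} (hp : p ≠ 0) {a : ℤ} {m : ℕ}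
    (h : ∀ j < m, Λ (fun t => (p * t + a) ^ j) = 0) : ∀ j < m, Λ (fun t => t ^ j) = 0 := by
  intro j
  induction j using Nat.strong_induction_on with
  | _ j ih =>
    intro hj
    have hexpand := h j hj
    rw [map_affine_pow, sum_range_succ, sum_eq_zero fun l hl => by
      rw [ih l (mem_range.mp hl) ((mem_range.mp hl).trans hj), mul_zero]] at hexpand
    simpa [hp] using hexpand

-- The terms of degree `> m` of `(Q t + w) ^ k` are divisible by `Q ^ (m + 1)`.
lemma map_pow_eq_zero_of_abs_lt {Q : ℤ} (hQ : Q ≠ 0) {w : ℤ} {m k : ℕ} (hmk : m ≤ k)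
    (hlow : ∀ j < m, Λ (fun t => t ^ j) = 0) (hk : Λ (fun t => (Q * t + w) ^ k) = 0)
    (hcop : IsCoprime Q ((k.choose m : ℤ) * w ^ (k - m))) (hlt : |Λ (fun t => t ^ m)| < Q) :
    Λ (fun t => t ^ m) = 0 := by
  refine Int.eq_zero_of_abs_lt_dvd (hcop.dvd_of_dvd_mul_left ?_) hlt
  rw [map_affine_pow, ← sum_range_add_sum_Ico _ (by omega : m + 1 ≤ k + 1), sum_range_succ,
    sum_eq_zero fun l hl => by rw [hlow l (mem_range.mp hl), mul_zero], zero_add] at hk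
  obtain ⟨c, hc⟩ : Q ^ (m + 1) ∣ ∑ l ∈ Ico (m + 1) (k + 1),
      (k.choose l : ℤ) * Q ^ l * w ^ (k - l) * Λ (fun t => t ^ l) :=
    dvd_sum fun l hl =>
      (((pow_dvd_pow Q (mem_Ico.mp hl).1).mul_left _).mul_right _).mul_right _
  rw [hc] at hk
  refine ⟨-c, mul_left_cancel₀ (pow_ne_zero m hQ) ?_⟩
  linear_combination hk

/-- The part of degree larger than `n` of the polynomial `(q t + w) ^ k` in `t`. -/
def highPart (n k : ℕ) (q w t : ℤ) : ℤ :=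
  ∑ l ∈ Ico (n + 1) (k + 1), (k.choose l : ℤ) * q ^ l * w ^ (k - l) * t ^ l

/-- The forms `t, t ^ 2, …, t ^ n` and the part of degree larger than `n` of `(q t + w) ^ k`.
They generate, up to constants, the same system as `t, t ^ 2, …, t ^ n, (q t + w) ^ k`, and the
`j`-th of them vanishes to order `j + 1` at `t = 0`. -/
def localForm (n k : ℕ) (q w : ℤ) : Fin (n + 1) → ℤ → ℤ :=
  Fin.snoc (α := fun _ => ℤ → ℤ) (fun j t => t ^ (j + 1 : ℕ)) (highPart n k q w)

@[simp] lemma localForm_castSucc (n k : ℕ) (q w : ℤ) (j : Fin n) :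
    localForm n k q w j.castSucc = fun t => t ^ (j + 1 : ℕ) :=
  Fin.snoc_castSucc (α := fun _ => ℤ → ℤ) ..

@[simp] lemma localForm_last (n k : ℕ) (q w : ℤ) :
    localForm n k q w (Fin.last n) = highPart n k q w :=
  Fin.snoc_last (α := fun _ => ℤ → ℤ) ..

lemma pow_dvd_localForm (n k : ℕ) (q w : ℤ) {p t : ℤ} (ht : p ∣ t) (j : Fin (n + 1)) :
    p ^ (j + 1 : ℕ) ∣ localForm n k q w j t := by
  induction j using Fin.lastCases with
  | last =>
    rw [localForm_last]
    exact dvd_sum fun l hl =>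
      ((pow_dvd_pow_of_dvd ht _).trans (pow_dvd_pow t (mem_Ico.mp hl).1)).mul_left _
  | cast j =>
    rw [localForm_castSucc]
    exact pow_dvd_pow_of_dvd ht _

lemma dvd_map_highPart_iff {n k : ℕ} (hnk : n ≤ k) (q w : ℤ) {N : ℤ}
    (h : ∀ l ≤ n, N ∣ Λ (fun t => t ^ l)) :
    N ∣ Λ (highPart n k q w) ↔ N ∣ Λ (fun t => (q * t + w) ^ k) := by
  have hhigh : highPart n k q w = ∑ l ∈ Ico (n + 1) (k + 1),
      ((k.choose l : ℤ) * q ^ l * w ^ (k - l)) • fun t : ℤ => t ^ l := by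
    funext t
    simp [highPart]
  rw [map_affine_pow, ← sum_range_add_sum_Ico _ (by omega : n + 1 ≤ k + 1), hhigh, map_sum]
  simp only [map_smul, smul_eq_mul]
  exact (Int.dvd_add_right (dvd_sum fun l hl => (h l (mem_range_succ_iff.mp hl)).mul_left _)).symm

lemma map_localForm_eq_zero {n k : ℕ} (hnk : n ≤ k) {q w : ℤ}
    (hlow : ∀ l ≤ n, Λ (fun t => t ^ l) = 0) (hk : Λ (fun t => (q * t + w) ^ k) = 0)
    (j : Fin (n + 1)) : Λ (localForm n k q w j) = 0 := by
  induction j using Fin.lastCases with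
  | last =>
    rw [localForm_last, ← zero_dvd_iff,
      dvd_map_highPart_iff hnk q w fun l hl => zero_dvd_iff.mpr (hlow l hl), hk]
  | cast j => simpa using hlow (j + 1) (by omega)

lemma dvd_map_pow_sysExp {n k : ℕ} (hnk : n ≤ k) {q w N : ℤ} (hone : N ∣ Λ (fun _ => 1))
    (h : ∀ j, N ∣ Λ (localForm n k q w j)) (j : Fin (n + 1)) :
    N ∣ Λ (fun t => (q * t + w) ^ sysExp n k j) := by
  have hlow : ∀ l ≤ n, N ∣ Λ (fun t => t ^ l) := fun l hl => by
    obtain _ | l := l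
    · simpa using hone
    · have := h (Fin.castSucc ⟨l, hl⟩)
      rwa [localForm_castSucc] at this
  induction j using Fin.lastCases with
  | last =>
    rw [sysExp_last, ← dvd_map_highPart_iff hnk q w hlow]
    simpa using h (Fin.last n)
  | cast j =>
    rw [map_affine_pow]
    exact dvd_sum fun l hl => (hlow l (by
      have := mem_range.mp hl
      simp only [sysExp_castSucc] at this
      omega)).mul_left _

end LinearFunctional

section LocalFibres

lemma card_le_mul_pow_sum {τ ι : Type*} [Fintype ι] {p N C : ℕ} (hp : 0 < p) {e : ι → ℕ}
    (he : ∀ j, e j ≤ N) {S : Finset τ} {G : ι → τ → ℤ} {c : ι → ℤ}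
    (hc : ∀ t ∈ S, ∀ j, (p : ℤ) ^ e j ∣ G j t - c j)
    (hC : ∀ R ⊆ S, (∀ t ∈ R, ∀ u ∈ R, ∀ j, (p : ℤ) ^ N ∣ G j t - G j u) → #R ≤ C) :
    #S ≤ C * p ^ ∑ j, (N - e j) := by
  classical
  have hne : ∀ j, NeZero (p ^ (N - e j)) := fun j => ⟨(pow_pos hp _).ne'⟩
  set ρ : τ → ∀ j, ZMod (p ^ (N - e j)) := fun t j => ((G j t - c j) / (p : ℤ) ^ e j : ℤ)
  have hfibre : ∀ v ∈ S.image ρ, #{t ∈ S | ρ t = v} ≤ C := by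
    refine fun v _ => hC _ (filter_subset _ _) fun t ht u hu j => ?_
    obtain ⟨htS, rfl⟩ := mem_filter.mp ht
    obtain ⟨huS, hut⟩ := mem_filter.mp hu
    have hquot := (ZMod.intCast_eq_intCast_iff_dvd_sub _ _ _).mp (congrFun hut j)
    have hmul := mul_dvd_mul_left ((p : ℤ) ^ e j) hquot
    rwa [mul_sub, Int.mul_ediv_cancel' (hc t htS j), Int.mul_ediv_cancel' (hc u huS j),
      sub_sub_sub_cancel_right, Nat.cast_pow, ← pow_add, Nat.add_sub_cancel' (he j)] at hmul
  refine (card_le_mul_card_image S C hfibre).trans (Nat.mul_le_mul_left _ ?_)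
  calc #(S.image ρ) ≤ Fintype.card (∀ j, ZMod (p ^ (N - e j))) := card_le_univ _
    _ = p ^ ∑ j, (N - e j) := by
      rw [Fintype.card_pi, ← prod_pow_eq_pow_sum]
      exact prod_congr rfl fun j _ => ZMod.card _

lemma sum_fin_sub_succ (n : ℕ) :
    ∑ j : Fin (n + 1), (n + 2 - (j + 1 : ℕ)) = (n + 1) * (n + 2) / 2 := by
  calc ∑ j : Fin (n + 1), (n + 2 - (j + 1 : ℕ))
      = ∑ j ∈ range (n + 1), (n + 2 - 1 - j) := by
        rw [Fin.sum_univ_eq_sum_range (fun j => n + 2 - (j + 1)) (n + 1)]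
        exact sum_congr rfl fun j _ => by omega
    _ = ∑ j ∈ range (n + 2), (n + 2 - 1 - j) := by
        rw [sum_range_succ _ (n + 1)]; simp
    _ = (n + 1) * (n + 2) / 2 := by
        rw [sum_range_reflect (fun j => j), sum_range_id, mul_comm]; rfl

/-- Evaluation of a function on `ℤ` at the entries of `u`, added up. -/
def evalSum {ι : Type*} [Fintype ι] (u : ι → ℤ) : (ℤ → ℤ) →ₗ[ℤ] ℤ :=
  ∑ i, LinearMap.proj (u i)

@[simp] lemma evalSum_apply {ι : Type*} [Fintype ι] (u : ι → ℤ) (f : ℤ → ℤ) :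
    evalSum u f = ∑ i, f (u i) := by
  simp [evalSum]

lemma card_le_of_pow_dvd_sum_localForm_sub {n k p : ℕ} (hp : p.Prime) (hnk : n + 1 ≤ k)
    (hkp : k < p) {q w : ℤ} (hq : ¬ (p : ℤ) ∣ q) {S : Finset (Fin (n + 1) → ℤ)}
    {c : Fin (n + 1) → ℤ}
    (hinj : ∀ t ∈ S, ∀ u ∈ S, (∀ i, (p : ℤ) ^ (n + 2) ∣ t i - u i) → t = u)
    (hdet : ∀ t ∈ S, ¬ (p : ℤ) ∣ (powerMatrix (fun j => sysExp n k j - 1)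
      fun i => q * t i + w).det)
    (hc : ∀ t ∈ S, ∀ j : Fin (n + 1),
      (p : ℤ) ^ (j + 1 : ℕ) ∣ ∑ i, localForm n k q w j (t i) - c j) :
    #S ≤ nonsingularBound n k * p ^ ((n + 1) * (n + 2) / 2) := by
  have hp' := Nat.prime_iff_prime_int.mp hp
  have hq0 : q ≠ 0 := fun h => hq (h ▸ dvd_zero _)
  have hexp : ∀ j, ¬ p ∣ sysExp n k j := fun j => by
    induction j using Fin.lastCases with
    | last => simpa using Nat.not_dvd_of_pos_of_lt (by omega) hkp
    | cast j => simpa using Nat.not_dvd_of_pos_of_lt (by omega) (by omega)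
  rw [← sum_fin_sub_succ]
  refine card_le_mul_pow_sum hp.pos (fun j => by omega) hc fun R hRS hR => ?_
  set z : (Fin (n + 1) → ℤ) → Fin (n + 1) → ℤ := fun t i => q * t i + w
  have hz : Function.Injective z := fun t u htu => funext fun i => by
    simpa [z, hq0] using congrFun htu i
  rw [← card_image_of_injective R hz]
  refine card_le_nonsingularBound_of_pow_dvd hp (N := n + 2) (by omega) hexp ?_ ?_ ?_
  · refine forall_mem_image.mpr fun t ht => forall_mem_image.mpr fun u hu h => ?_
    refine congrArg z (hinj t (hRS ht) u (hRS hu) fun i => ?_)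
    refine hp'.pow_dvd_of_dvd_mul_left _ hq ?_
    simpa [z, mul_sub] using h i
  · refine forall_mem_image.mpr fun t ht => forall_mem_image.mpr fun u hu j => ?_
    simpa [z] using dvd_map_pow_sysExp (Λ := evalSum t - evalSum u) (q := q) (w := w)
      (by omega : n ≤ k) (by simp) (fun j => by simpa using hR t ht u hu j) j
  · exact forall_mem_image.mpr fun t ht => hdet t (hRS ht)

end LocalFibres

section System

/-- The forms of the system counted by `Icount`, together with the constant form `x ^ 0`, whose
equation always holds. -/
def sysVec (k m : ℕ) (q b x : ℤ) : Option (Fin m) → ℤ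
  | none => (q * x + b) ^ k
  | some j => x ^ (j : ℕ)

lemma map_sysVec_eq_zero_iff (Λ : (ℤ → ℤ) →ₗ[ℤ] ℤ) (k m : ℕ) (q b : ℤ) :
    (∀ c, Λ (fun t => sysVec k m q b t c) = 0) ↔
      Λ (fun t => (q * t + b) ^ k) = 0 ∧ ∀ j < m, Λ (fun t => t ^ j) = 0 := by
  simp [Option.forall, Fin.forall_iff, sysVec]

lemma tupleSum_sysVec_apply {ι : Type*} [Fintype ι] (k m : ℕ) (q b : ℤ) (u : ι → ℤ)
    (c : Option (Fin m)) :
    tupleSum (sysVec k m q b) u c = evalSum u (fun t => sysVec k m q b t c) := by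
  simp [tupleSum]

/-- The range `0 ≤ x ≤ X / q` of the variables of `Icount`. -/
noncomputable def intBox (X : ℝ) (q : ℕ) : Finset ℤ := Icc 0 ⌊X / q⌋

lemma mem_intBox {X : ℝ} {q : ℕ} {x : ℤ} : x ∈ intBox X q ↔ 0 ≤ x ∧ (x : ℝ) ≤ X / q := by
  rw [intBox, mem_Icc, Int.le_floor]

lemma Icount_eq_energyOn (s k m : ℕ) (X : ℝ) (q : ℕ) (b : ℤ) :
    Icount s k m X q b =
      energyOn (tupleSum (sysVec k m q b)) (Fintype.piFinset fun _ : Fin s => intBox X q) := by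
  rw [Icount, energyOn, ← Set.ncard_coe_finset]
  congr 1
  ext z
  have hsys := map_sysVec_eq_zero_iff (evalSum z.1 - evalSum z.2) k m q b
  simp only [LinearMap.sub_apply, evalSum_apply, sub_eq_zero] at hsys
  have hlow : (∀ j ∈ Icc 1 (m - 1), ∑ i, z.1 i ^ j = ∑ i, z.2 i ^ j) ↔
      ∀ j < m, ∑ i, z.1 i ^ j = ∑ i, z.2 i ^ j := by
    refine ⟨fun h j hj => ?_, fun h j hj => h j (by have := mem_Icc.mp hj; omega)⟩
    obtain rfl | hj0 := j.eq_zero_or_pos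
    · simp
    · exact h j (mem_Icc.mpr ⟨hj0, by omega⟩)
  simp only [Set.mem_ofPred_eq, mem_coe, mem_filter, mem_product, Fintype.mem_piFinset, mem_intBox,
    sum_sub_distrib, sub_eq_zero, hlow, ← hsys, funext_iff, tupleSum_sysVec_apply, evalSum_apply,
    and_assoc]

end System

section Descent

/-- The conditions on a prime `p` under which `Icount (n + 1 + r) k (n + 1) X q b` can be bounded
in terms of `Icount r k (n + 2) X (p * q) (b + a * q)`: the modulus `p * q` has only prime factors
larger than `k`, and the variables are small compared with the moduli. -/
structure IsAdmissible (k n r : ℕ) (X : ℝ) (q p : ℕ) : Prop where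
  prime : p.Prime
  not_dvd : ¬ p ∣ q
  lt_of_prime_dvd : ∀ ℓ : ℕ, ℓ.Prime → ℓ ∣ p * q → k < ℓ
  mul_floor_pow_lt : 2 * (r : ℤ) * ⌊X / (p * q : ℕ)⌋ ^ (n + 1) < (p * q : ℕ)
  floor_lt : ⌊X / q⌋ < (p : ℤ) ^ (n + 2)

lemma isCoprime_choose_of_lt {k Q : ℕ} (h : ∀ ℓ : ℕ, ℓ.Prime → ℓ ∣ Q → k < ℓ) {m : ℕ}
    (hmk : m ≤ k) : IsCoprime (Q : ℤ) (k.choose m) := by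
  refine Nat.isCoprime_iff_coprime.mpr (Nat.coprime_of_dvd fun ℓ hℓ hℓQ hdvd => ?_)
  refine (h ℓ hℓ hℓQ).not_ge (hℓ.dvd_factorial.mp (hdvd.trans ?_))
  rw [← Nat.choose_mul_factorial_mul_factorial hmk, mul_assoc]
  exact dvd_mul_right ..

variable {k n r : ℕ} {X : ℝ} {p q : ℕ} {a b : ℤ}

lemma sum_pow_mem_Icc {ι : Type*} [Fintype ι] {u : ι → ℤ} {B : ℤ} (hu : ∀ i, u i ∈ Icc 0 B)
    (m : ℕ) : ∑ i, u i ^ m ∈ Icc 0 (Fintype.card ι * B ^ m) := by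
  simp only [mem_Icc] at hu ⊢
  refine ⟨sum_nonneg fun i _ => pow_nonneg (hu i).1 m, ?_⟩
  simpa using sum_le_card_nsmul univ _ _ fun i _ => pow_le_pow_left₀ (hu i).1 (hu i).2 m

lemma IsAdmissible.tupleSum_sub_eq (h : IsAdmissible k n r X q p) (hnk : n + 1 ≤ k)
    (hcop : IsCoprime (b + a * q) ((p * q : ℕ) : ℤ)) {u v u' v' : Fin r → ℤ}
    (hu : ∀ i, u i ∈ intBox X (p * q)) (hv : ∀ i, v i ∈ intBox X (p * q))
    (hu' : ∀ i, u' i ∈ intBox X (p * q)) (hv' : ∀ i, v' i ∈ intBox X (p * q))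
    (heq : tupleSum (sysVec k (n + 1) q b) (fun i => p * u i + a) -
        tupleSum (sysVec k (n + 1) q b) (fun i => p * v i + a) =
      tupleSum (sysVec k (n + 1) q b) (fun i => p * u' i + a) -
        tupleSum (sysVec k (n + 1) q b) (fun i => p * v' i + a)) :
    tupleSum (sysVec k (n + 2) (p * q : ℕ) (b + a * q)) u -
        tupleSum (sysVec k (n + 2) (p * q : ℕ) (b + a * q)) v =
      tupleSum (sysVec k (n + 2) (p * q : ℕ) (b + a * q)) u' -
        tupleSum (sysVec k (n + 2) (p * q : ℕ) (b + a * q)) v' := by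
  have hq : q ≠ 0 := fun hq => h.not_dvd (hq ▸ dvd_zero p)
  set Λ : (ℤ → ℤ) →ₗ[ℤ] ℤ := evalSum u - evalSum v - (evalSum u' - evalSum v') with hΛ
  have hvec : ∀ c, Λ (fun t => sysVec k (n + 1) q b (p * t + a) c) = 0 := fun c => by
    simpa [hΛ, tupleSum_sysVec_apply, sub_eq_zero] using congrFun heq c
  have hlow : ∀ j < n + 1, Λ (fun t => t ^ j) = 0 :=
    map_pow_eq_zero_of_affine (mod_cast h.prime.ne_zero : (p : ℤ) ≠ 0) fun j hj =>
      hvec (some ⟨j, hj⟩)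
  have htop : Λ (fun t => ((p * q : ℕ) * t + (b + a * q)) ^ k) = 0 := by
    rw [← hvec none]
    refine congrArg Λ (funext fun t => ?_)
    simp only [sysVec]
    push_cast
    ring
  rw [← sub_eq_zero]
  funext c
  simp only [Pi.sub_apply, Pi.zero_apply, tupleSum_sysVec_apply]
  refine (map_sysVec_eq_zero_iff Λ k (n + 2) (p * q : ℕ) (b + a * q)).mpr ?_ c
  refine ⟨htop, fun j hj => ?_⟩
  obtain hj | rfl := Nat.lt_succ_iff_lt_or_eq.mp hj
  · exact hlow j hj
  refine map_pow_eq_zero_of_abs_lt (mod_cast mul_ne_zero h.prime.ne_zero hq) hnk hlow htop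
    ((isCoprime_choose_of_lt h.lt_of_prime_dvd hnk).mul_right hcop.symm.pow_right) ?_
  have hsize := h.mul_floor_pow_lt
  have hbu := mem_Icc.mp (sum_pow_mem_Icc hu (n + 1))
  have hbv := mem_Icc.mp (sum_pow_mem_Icc hv (n + 1))
  have hbu' := mem_Icc.mp (sum_pow_mem_Icc hu' (n + 1))
  have hbv' := mem_Icc.mp (sum_pow_mem_Icc hv' (n + 1))
  rw [Fintype.card_fin] at hbu hbv hbu' hbv'
  simp only [hΛ, LinearMap.sub_apply, evalSum_apply, abs_lt]
  constructor <;> linarith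

/-- A finite set of integers congruent to `a` modulo `p`; for `0 ≤ a < p` it contains all those
which lie in `intBox X q`. -/
noncomputable def residueBox (X : ℝ) (p q : ℕ) (a : ℤ) : Finset ℤ :=
  (intBox X (p * q)).image fun u => p * u + a

lemma IsAdmissible.card_filter_tupleSum_sub_le (h : IsAdmissible k n r X q p) (hnk : n + 1 ≤ k)
    (hcop : IsCoprime (b + a * q) ((p * q : ℕ) : ℤ)) (g : Option (Fin (n + 1)) → ℤ) :
    #{z ∈ (Fintype.piFinset fun _ : Fin r => residueBox X p q a) ×ˢ
        Fintype.piFinset fun _ : Fin r => residueBox X p q a |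
      tupleSum (sysVec k (n + 1) q b) z.1 - tupleSum (sysVec k (n + 1) q b) z.2 = g} ≤
      Icount r k (n + 2) X (p * q) (b + a * q) := by
  have hlift : ∀ x ∈ Fintype.piFinset fun _ : Fin r => residueBox X p q a,
      ∃ u : Fin r → ℤ, (∀ i, u i ∈ intBox X (p * q)) ∧ (fun i => p * u i + a) = x := by
    intro x hx
    simpa [residueBox, Fintype.piFinset_image] using hx
  obtain hempty | ⟨⟨x₀, y₀⟩, hz₀⟩ := eq_empty_or_nonempty {z ∈ (Fintype.piFinset fun _ : Fin r =>
      residueBox X p q a) ×ˢ Fintype.piFinset fun _ : Fin r => residueBox X p q a |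
        tupleSum (sysVec k (n + 1) q b) z.1 - tupleSum (sysVec k (n + 1) q b) z.2 = g}
  · rw [hempty]
    exact Nat.zero_le _
  simp only [mem_filter, mem_product] at hz₀
  obtain ⟨⟨hx₀, hy₀⟩, rfl⟩ := hz₀
  obtain ⟨u₀, hu₀, rfl⟩ := hlift x₀ hx₀
  obtain ⟨v₀, hv₀, rfl⟩ := hlift y₀ hy₀
  rw [Icount_eq_energyOn]
  refine le_trans (card_le_card_of_surjOn
    (fun w => (fun i => p * w.1 i + a, fun i => p * w.2 i + a)) ?_)
    (card_filter_sub_eq_le_energyOn (tupleSum (sysVec k (n + 2) (p * q : ℕ) (b + a * q)))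
      (Fintype.piFinset fun _ : Fin r => intBox X (p * q))
      (tupleSum (sysVec k (n + 2) (p * q : ℕ) (b + a * q)) u₀ -
        tupleSum (sysVec k (n + 2) (p * q : ℕ) (b + a * q)) v₀))
  rintro ⟨x, y⟩ hz
  simp only [coe_filter, mem_product, Set.mem_ofPred_eq] at hz
  obtain ⟨u, hu, rfl⟩ := hlift x hz.1.1
  obtain ⟨v, hv, rfl⟩ := hlift y hz.1.2
  refine ⟨(u, v), ?_, rfl⟩
  simp only [coe_filter, mem_product, Set.mem_ofPred_eq, Fintype.mem_piFinset]
  exact ⟨⟨hu, hv⟩, h.tupleSum_sub_eq hnk hcop hu hv hu₀ hv₀ hz.2⟩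

end Descent

section ClassBound

lemma pow_dvd_sum_localForm_sub {n k : ℕ} (hnk : n ≤ k) {ι κ : Type*} [Fintype ι] [Fintype κ]
    {p q a b : ℤ} {x y : ι → ℤ} {u v : κ → ℤ} (hu : ∀ i, p ∣ u i - a) (hv : ∀ i, p ∣ v i - a)
    (heq : tupleSum (sysVec k (n + 1) q b) x + tupleSum (sysVec k (n + 1) q b) u =
      tupleSum (sysVec k (n + 1) q b) y + tupleSum (sysVec k (n + 1) q b) v) (j : Fin (n + 1)) :
    p ^ (j + 1 : ℕ) ∣ ∑ i, localForm n k q (b + a * q) j (x i - a) -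
      ∑ i, localForm n k q (b + a * q) j (y i - a) := by
  set Λ : (ℤ → ℤ) →ₗ[ℤ] ℤ := evalSum (fun i => x i - a) + evalSum (fun i => u i - a) -
    (evalSum (fun i => y i - a) + evalSum (fun i => v i - a)) with hΛ
  have hvec : ∀ c, Λ (fun t => sysVec k (n + 1) q b (1 * t + a) c) = 0 := fun c => by
    simpa [hΛ, tupleSum_sysVec_apply, sub_eq_zero] using congrFun heq c
  have hlow : ∀ l < n + 1, Λ (fun t => t ^ l) = 0 :=
    map_pow_eq_zero_of_affine one_ne_zero fun l hl => hvec (some ⟨l, hl⟩)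
  have htop : Λ (fun t => (q * t + (b + a * q)) ^ k) = 0 := by
    rw [← hvec none]
    refine congrArg Λ (funext fun t => ?_)
    simp only [sysVec]
    ring
  have hlocal := map_localForm_eq_zero hnk (fun l hl => hlow l (Nat.lt_succ_of_le hl)) htop j
  simp only [hΛ, LinearMap.sub_apply, LinearMap.add_apply, evalSum_apply] at hlocal
  have hdvd : ∀ w : κ → ℤ, (∀ i, p ∣ w i - a) →
      p ^ (j + 1 : ℕ) ∣ ∑ i, localForm n k q (b + a * q) j (w i - a) := fun w hw =>
    dvd_sum fun i _ => pow_dvd_localForm n k q _ (hw i) j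
  rw [add_sub_add_comm, add_eq_zero_iff_eq_neg, neg_sub] at hlocal
  rw [hlocal]
  exact dvd_sub (hdvd v hv) (hdvd u hu)

variable {k n r : ℕ} {X : ℝ} {p q : ℕ} {a b : ℤ}

/-- The tuples with entries in `intBox X q` at which the Jacobian determinant of the system of
exponents `1, …, n, k` is not divisible by `p`. -/
noncomputable def nonsingularTuples (k n : ℕ) (X : ℝ) (q p : ℕ) (b : ℤ) :
    Finset (Fin (n + 1) → ℤ) :=
  {x ∈ Fintype.piFinset fun _ => intBox X q |
    ¬ (p : ℤ) ∣ (powerMatrix (fun j => sysExp n k j - 1) fun i => q * x i + b).det}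

lemma card_nonsingularTuples_le (h : ⌊X / q⌋ < (p : ℤ) ^ (n + 2)) :
    #(nonsingularTuples k n X q p b) ≤ p ^ ((n + 1) * (n + 2)) := by
  refine (card_filter_le _ _).trans ?_
  rw [Fintype.card_piFinset_const, mul_comm, pow_mul, intBox, Int.card_Icc]
  exact Nat.pow_le_pow_left (Int.toNat_le.mpr (by push_cast; linarith)) _

lemma dvd_sub_of_mem_residueBox {t : ℤ} (ht : t ∈ residueBox X p q a) : (p : ℤ) ∣ t - a := by
  obtain ⟨u, -, rfl⟩ := mem_image.mp ht
  simp

lemma IsAdmissible.card_le_of_subset_nonsingularTuples (h : IsAdmissible k n r X q p)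
    (hnk : n + 1 ≤ k) (a : ℤ) {y : Fin (n + 1) → ℤ} {R : Finset (Fin (n + 1) → ℤ)}
    (hR : R ⊆ nonsingularTuples k n X q p b)
    (hsol : ∀ x ∈ R, ∃ u ∈ Fintype.piFinset fun _ : Fin r => residueBox X p q a,
      ∃ v ∈ Fintype.piFinset fun _ : Fin r => residueBox X p q a,
        tupleSum (sysVec k (n + 1) q b) x + tupleSum (sysVec k (n + 1) q b) u =
          tupleSum (sysVec k (n + 1) q b) y + tupleSum (sysVec k (n + 1) q b) v) :
    #R ≤ nonsingularBound n k * p ^ ((n + 1) * (n + 2) / 2) := by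
  have hshift : Function.Injective fun (x : Fin (n + 1) → ℤ) i => x i - a :=
    fun x x' hx => funext fun i => by simpa using congrFun hx i
  have hmem : ∀ x ∈ R, (∀ i, x i ∈ intBox X q) ∧
      ¬ (p : ℤ) ∣ (powerMatrix (fun j => sysExp n k j - 1) fun i => q * x i + b).det :=
    fun x hx => by simpa [nonsingularTuples] using hR hx
  rw [← card_image_of_injective R hshift]
  refine card_le_of_pow_dvd_sum_localForm_sub h.prime hnk
    (h.lt_of_prime_dvd p h.prime (dvd_mul_right p q)) (q := q) (mod_cast h.not_dvd)
    (w := b + a * q)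
    (c := fun j => ∑ i, localForm n k q (b + a * q) j (y i - a)) ?_ ?_ ?_
  · refine forall_mem_image.mpr fun x hx => forall_mem_image.mpr fun x' hx' hdvd => ?_
    refine congrArg (fun x i => x i - a) (funext fun i => ?_)
    have hxi := mem_Icc.mp ((hmem x hx).1 i)
    have hxi' := mem_Icc.mp ((hmem x' hx').1 i)
    have hfloor := h.floor_lt
    refine sub_eq_zero.mp (Int.eq_zero_of_abs_lt_dvd (m := (p : ℤ) ^ (n + 2)) ?_ ?_)
    · simpa using hdvd i
    · rw [abs_lt]
      constructor <;> linarith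
  · refine forall_mem_image.mpr fun x hx => ?_
    convert (hmem x hx).2 using 5
    ring
  · refine forall_mem_image.mpr fun x hx j => ?_
    obtain ⟨u, hu, v, hv, heq⟩ := hsol x hx
    exact pow_dvd_sum_localForm_sub (by omega)
      (fun i => dvd_sub_of_mem_residueBox (Fintype.mem_piFinset.mp hu i))
      (fun i => dvd_sub_of_mem_residueBox (Fintype.mem_piFinset.mp hv i)) heq j

lemma IsAdmissible.energyOn_residueBox_le (h : IsAdmissible k n r X q p) (hnk : n + 1 ≤ k)
    (hcop : IsCoprime (b + a * q) ((p * q : ℕ) : ℤ)) :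
    energyOn (fun z : (Fin (n + 1) → ℤ) × (Fin r → ℤ) =>
        tupleSum (sysVec k (n + 1) q b) z.1 + tupleSum (sysVec k (n + 1) q b) z.2)
      (nonsingularTuples k n X q p b ×ˢ Fintype.piFinset fun _ => residueBox X p q a) ≤
      p ^ ((n + 1) * (n + 2)) * (nonsingularBound n k * p ^ ((n + 1) * (n + 2) / 2) *
        Icount r k (n + 2) X (p * q) (b + a * q)) :=
  (energyOn_prod_le _ _ _ _ (fun _ _ _ => h.card_le_of_subset_nonsingularTuples hnk a)
    (h.card_filter_tupleSum_sub_le hnk hcop)).trans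
    (Nat.mul_le_mul_right _ (card_nonsingularTuples_le h.floor_lt))

end ClassBound

section GoodBound

variable {k n r : ℕ} {X : ℝ} {p q : ℕ} {b : ℤ}

lemma mem_residueBox_emod (hp : 0 < p) {t : ℤ} (ht : t ∈ intBox X q) :
    t ∈ residueBox X p q (t % p) := by
  refine mem_image.mpr ⟨t / p, ?_, Int.mul_ediv_add_emod t p⟩
  obtain ⟨ht0, htX⟩ := mem_intBox.mp ht
  refine mem_intBox.mpr ⟨Int.ediv_nonneg ht0 p.cast_nonneg, ?_⟩
  calc ((t / p : ℤ) : ℝ) ≤ t / p := by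
        rw [le_div_iff₀ (mod_cast hp)]
        exact_mod_cast Int.ediv_mul_le t (Nat.cast_ne_zero.mpr hp.ne')
    _ ≤ X / q / p := by gcongr
    _ = X / (p * q : ℕ) := by rw [div_div, mul_comm, Nat.cast_mul]

lemma pairwiseDisjoint_residueBox (X : ℝ) (p q : ℕ) :
    (Ico (0 : ℤ) p : Set ℤ).PairwiseDisjoint (residueBox X p q) := by
  intro a ha a' ha' hne
  rw [Function.onFun, disjoint_left]
  intro t ht ht'
  have hmod := (Int.modEq_of_dvd (dvd_sub_of_mem_residueBox ht)).trans
    (Int.modEq_of_dvd (dvd_sub_of_mem_residueBox ht')).symm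
  rw [coe_Ico] at ha ha'
  rw [Int.ModEq, Int.emod_eq_of_lt ha.1 ha.2, Int.emod_eq_of_lt ha'.1 ha'.2] at hmod
  exact hne hmod

/-- The residues `a` modulo `p` for which `b + a * q` is a unit modulo `p`. -/
noncomputable def unitResidues (p q : ℕ) (b : ℤ) : Finset ℤ :=
  {a ∈ Ico (0 : ℤ) p | ¬ (p : ℤ) ∣ b + a * q}

lemma card_unitResidues_le (p q : ℕ) (b : ℤ) : #(unitResidues p q b) ≤ p :=
  (card_filter_le _ _).trans_eq (by simp)

lemma unitResidues_nonempty (hp : 1 < p) (hq : ¬ p ∣ q) (b : ℤ) :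
    (unitResidues p q b).Nonempty := by
  by_contra! hempty
  have hdvd : ∀ a ∈ Ico (0 : ℤ) p, (p : ℤ) ∣ b + a * q := by
    simpa [unitResidues, filter_eq_empty_iff] using hempty
  have hzero := hdvd 0 (by simp; omega)
  have hone := hdvd 1 (by simp; omega)
  refine hq (Int.natCast_dvd_natCast.mp ?_)
  simpa using dvd_sub hone hzero

lemma emod_mem_unitResidues (hp : 0 < p) {t : ℤ} (ht : ¬ (p : ℤ) ∣ q * t + b) :
    t % p ∈ unitResidues p q b := by
  have hp' : (0 : ℤ) < p := mod_cast hp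
  refine mem_filter.mpr ⟨mem_Ico.mpr ⟨Int.emod_nonneg _ hp'.ne', Int.emod_lt_of_pos _ hp'⟩,
    fun hdvd => ht ?_⟩
  have hsplit : (q : ℤ) * t + b = b + t % p * q + q * (t - t % p) := by ring
  exact hsplit ▸ dvd_add hdvd (Int.dvd_self_sub_emod.mul_left _)

lemma isCoprime_of_mem_unitResidues (hp : p.Prime) (hb : IsCoprime b q) {a : ℤ}
    (ha : a ∈ unitResidues p q b) : IsCoprime (b + a * q) ((p * q : ℕ) : ℤ) := by
  rw [Nat.cast_mul]
  have hpa : IsCoprime (p : ℤ) (b + a * q) :=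
    (Nat.prime_iff_prime_int.mp hp).coprime_iff_not_dvd.mpr (mem_filter.mp ha).2
  exact hpa.symm.mul_right (hb.add_mul_right_left a)

/-- The tuples from `intBox X q` whose first `n + 1` entries are nonsingular modulo `p` and
none of whose entries `x` satisfies `p ∣ q * x + b`. -/
noncomputable def goodTuples (k n r : ℕ) (X : ℝ) (q p : ℕ) (b : ℤ) :
    Finset (Fin (n + 1 + r) → ℤ) :=
  {x ∈ Fintype.piFinset fun _ => intBox X q | (∀ i, ¬ (p : ℤ) ∣ q * x i + b) ∧
    (fun i => x (Fin.castAdd r i)) ∈ nonsingularTuples k n X q p b}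

lemma energyOn_goodTuples_le (hp : 0 < p) :
    energyOn (tupleSum (sysVec k (n + 1) q b)) (goodTuples k n r X q p b) ≤
      energyOn (fun z : (Fin (n + 1) → ℤ) × (Fin r → ℤ) =>
          tupleSum (sysVec k (n + 1) q b) z.1 + tupleSum (sysVec k (n + 1) q b) z.2)
        (nonsingularTuples k n X q p b ×ˢ Fintype.piFinset fun _ =>
          (unitResidues p q b).biUnion (residueBox X p q)) := by
  refine energyOn_le_of_injOn
    (fun x => (fun i => x (Fin.castAdd r i), fun i => x (Fin.natAdd (n + 1) i))) ?_ ?_ ?_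
  · intro x _ y _ h
    simp only [Prod.mk.injEq] at h
    funext i
    induction i using Fin.addCases with
    | left i => exact congrFun h.1 i
    | right i => exact congrFun h.2 i
  · intro x hx
    obtain ⟨hbox, hunit, hsing⟩ := mem_filter.mp hx
    refine mem_product.mpr ⟨hsing, Fintype.mem_piFinset.mpr fun i => mem_biUnion.mpr ?_⟩
    exact ⟨_, emod_mem_unitResidues hp (hunit _),
      mem_residueBox_emod hp (Fintype.mem_piFinset.mp hbox _)⟩
  · intro x _ y _ h
    simpa [tupleSum, Fin.sum_univ_add] using h

lemma IsAdmissible.exists_energyOn_goodTuples_le (h : IsAdmissible k n r X q p) (hnk : n + 1 ≤ k)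
    (hr : 0 < r) (hb : IsCoprime b q) :
    ∃ a ∈ unitResidues p q b,
      energyOn (tupleSum (sysVec k (n + 1) q b)) (goodTuples k n r X q p b) ≤
        nonsingularBound n k * p ^ (2 * r + (n + 1) * (n + 2) / 2 + (n + 1) * (n + 2)) *
          Icount r k (n + 2) X (p * q) (b + a * q) := by
  have : Nonempty (Fin r) := ⟨⟨0, hr⟩⟩
  obtain ⟨a, ha, hle⟩ := exists_energyOn_add_tupleSum_biUnion_le (ι := Fin r)
    (tupleSum (sysVec k (n + 1) q b)) (nonsingularTuples k n X q p b) (sysVec k (n + 1) q b)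
    (unitResidues_nonempty h.prime.one_lt h.not_dvd b)
    ((pairwiseDisjoint_residueBox X p q).subset (coe_subset.mpr (filter_subset _ _)))
  have hclass := h.energyOn_residueBox_le hnk (isCoprime_of_mem_unitResidues h.prime hb ha)
  refine ⟨a, ha, (energyOn_goodTuples_le h.prime.pos).trans (hle.trans ?_)⟩
  rw [Fintype.card_fin]
  refine (Nat.mul_le_mul (Nat.pow_le_pow_left (card_unitResidues_le p q b) _) hclass).trans_eq ?_
  ring

end GoodBound

section PrimeSelection

variable {k n r q : ℕ} {X : ℝ} {b : ℤ}

lemma sysExp_sub_one_injective (hnk : n + 1 ≤ k) :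
    Function.Injective fun j => sysExp n k j - 1 := by
  intro i j
  induction i using Fin.lastCases <;> induction j using Fin.lastCases <;>
    simp [Fin.ext_iff] <;> omega

lemma sysExp_le (hnk : n ≤ k) (j : Fin (n + 1)) : sysExp n k j ≤ k := by
  induction j using Fin.lastCases with
  | last => simp
  | cast j => simpa using (Nat.succ_le_of_lt j.isLt).trans hnk

lemma exists_mem_not_dvd_of_abs_lt_prod {P : Finset ℕ} (hP : ∀ p ∈ P, p.Prime) {N : ℤ}
    (hN : N ≠ 0) (hlt : |N| < ((∏ p ∈ P, p : ℕ) : ℤ)) : ∃ p ∈ P, ¬ (p : ℤ) ∣ N := by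
  by_contra! hdvd
  have hprod : ∏ p ∈ P, p ∣ N.natAbs :=
    prod_primes_dvd _ (fun p hp => (hP p hp).prime) fun p hp => Int.natCast_dvd.mp (hdvd p hp)
  refine hlt.not_ge ?_
  rw [Int.abs_eq_natAbs]
  exact_mod_cast Nat.le_of_dvd (Int.natAbs_pos.mpr hN) hprod

-- A prime is good for `x` as soon as it does not divide the product of `q`, the Jacobian
-- determinant and all the `q * x i + b`.
lemma exists_mem_goodTuples (hnk : n + 1 ≤ k) (hq : 0 < q) (hb : 0 ≤ b)
    {x : Fin (n + 1 + r) → ℤ} (hx : x ∈ regularTuples (Fin (n + 1 + r)) (intBox X q) 0) {B : ℤ}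
    (hB : ∀ i, q * x i + b ≤ B) {P : Finset ℕ} (hP : ∀ p ∈ P, p.Prime)
    (hprod : (n + 1).factorial * B ^ ((k - 1) * (n + 1)) * q * B ^ (n + 1 + r) <
      ((∏ p ∈ P, p : ℕ) : ℤ)) :
    ∃ p ∈ P, ¬ p ∣ q ∧ x ∈ goodTuples k n r X q p b := by
  obtain ⟨hbox, hinj, hne⟩ := mem_regularTuples.mp hx
  have hq' : (0 : ℤ) < q := mod_cast hq
  have hpos : ∀ i, 0 < q * x i + b := fun i =>
    add_pos_of_pos_of_nonneg (mul_pos hq' ((mem_intBox.mp (hbox i)).1.lt_of_ne' (hne i))) hb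
  set Δ := (powerMatrix (fun j => sysExp n k j - 1) fun i => q * x (Fin.castAdd r i) + b).det
  have hΔ : Δ ≠ 0 := by
    refine det_powerMatrix_ne_zero (sysExp_sub_one_injective hnk) (fun i j hij => ?_)
      fun i => hpos _
    exact Fin.castAdd_injective _ _ (hinj (mul_left_cancel₀ hq'.ne' (add_right_cancel hij)))
  have hΔle : |Δ| ≤ (n + 1).factorial * B ^ ((k - 1) * (n + 1)) := by
    have hle := abs_det_powerMatrix_le (B := B) (K := k - 1) ((hpos 0).trans_le (hB 0))
      (fun j => Nat.sub_le_sub_right (sysExp_le (by omega) j) 1)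
      fun i : Fin (n + 1) => (abs_of_pos (hpos (Fin.castAdd r i))).trans_le (hB _)
    rwa [Fintype.card_fin] at hle
  have hforms : ∏ i, (q * x i + b) ≤ B ^ (n + 1 + r) := by
    simpa using prod_le_prod (s := univ) (fun i _ => (hpos i).le) fun i _ => hB i
  have hformspos : 0 < ∏ i, (q * x i + b) := prod_pos fun i _ => hpos i
  have hB0 : 0 ≤ B := (hpos 0).le.trans (hB 0)
  obtain ⟨p, hp, hdvd⟩ := exists_mem_not_dvd_of_abs_lt_prod hP (N := Δ * q * ∏ i, (q * x i + b))
    (mul_ne_zero (mul_ne_zero hΔ hq'.ne') hformspos.ne') <| by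
      refine lt_of_le_of_lt ?_ hprod
      rw [abs_mul, abs_mul, abs_of_pos hq', abs_of_pos hformspos]
      gcongr
  refine ⟨p, hp, fun h => hdvd ?_, mem_filter.mpr ⟨Fintype.mem_piFinset.mpr hbox, fun i h =>
    hdvd ((h.trans (dvd_prod_of_mem (fun i => q * x i + b) (mem_univ i))).mul_left _),
    mem_filter.mpr ⟨Fintype.mem_piFinset.mpr fun i => hbox _, fun h => hdvd ?_⟩⟩⟩
  · exact ((Int.natCast_dvd_natCast.mpr h).mul_left _).mul_right _
  · exact (h.mul_right _).mul_right _

lemma mul_add_le_floor_two_mul (hq : 0 < q) (hbq : b < q) {t : ℤ} (ht : t ∈ intBox X q)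
    (ht0 : t ≠ 0) :
    q * t + b ≤ ⌊2 * X⌋ := by
  obtain ⟨htnn, htX⟩ := mem_intBox.mp ht
  have hqt : (q : ℝ) * t ≤ X := by rwa [le_div_iff₀' (mod_cast hq)] at htX
  have hbt : (b : ℝ) ≤ q * t := by
    exact_mod_cast hbq.le.trans (le_mul_of_one_le_right q.cast_nonneg (htnn.lt_of_ne' ht0))
  rw [Int.le_floor]
  push_cast
  linarith

lemma exists_Icount_le_mul_energyOn_goodTuples (hnk : n + 1 ≤ k) (hq : 0 < q) (hb : 0 ≤ b)
    (hbq : b < q) {P : Finset ℕ} (hP : ∀ p ∈ P, p.Prime)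
    (hbox : regularThreshold (n + 1 + r) ≤ #(intBox X q))
    (hprod : (n + 1).factorial * ⌊2 * X⌋ ^ ((k - 1) * (n + 1)) * q * ⌊2 * X⌋ ^ (n + 1 + r) <
      ((∏ p ∈ P, p : ℕ) : ℤ)) :
    ∃ p ∈ P, ¬ p ∣ q ∧ Icount (n + 1 + r) k (n + 1) X q b ≤
      12 * #P ^ 2 * energyOn (tupleSum (sysVec k (n + 1) q b)) (goodTuples k n r X q p b) := by
  rw [← Fintype.card_fin (n + 1 + r)] at hbox
  have hregular := energyOn_le_twelve_mul_regular (sysVec k (n + 1) q b) 0 hbox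
  rw [← Icount_eq_energyOn] at hregular
  have hcover : regularTuples (Fin (n + 1 + r)) (intBox X q) 0 ⊆
      {p ∈ P | ¬ p ∣ q}.biUnion fun p => goodTuples k n r X q p b := fun x hx => by
    obtain ⟨hmem, -, hx0⟩ := mem_regularTuples.mp hx
    obtain ⟨p, hp, hpq, hgood⟩ := exists_mem_goodTuples hnk hq hb hx
      (fun i => mul_add_le_floor_two_mul hq hbq (hmem i) (hx0 i)) hP hprod
    exact mem_biUnion.mpr ⟨p, mem_filter.mpr ⟨hp, hpq⟩, hgood⟩
  obtain ⟨p, hp, hle⟩ := exists_energyOn_le_of_subset_biUnion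
    (tupleSum (sysVec k (n + 1) q b)) hcover (regularTuples_nonempty 0 hbox)
  obtain ⟨hpP, hpq⟩ := mem_filter.mp hp
  refine ⟨p, hpP, hpq, hregular.trans ?_⟩
  rw [mul_assoc]
  refine Nat.mul_le_mul_left _ (hle.trans (Nat.mul_le_mul_right _ ?_))
  exact Nat.pow_le_pow_left (card_filter_le _ _) 2

end PrimeSelection

section Scale

variable {k n r s q : ℕ} {Y : ℝ}

lemma pow_div_le_pow (hY : 0 < Y) {Q : ℝ} (hQ : Y ^ (n * (n + 2)) ≤ Q) :
    Y ^ ((n + 1) * (n + 2)) / Q ≤ Y ^ (n + 2) := by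
  rw [div_le_iff₀ ((pow_pos hY _).trans_le hQ), add_one_mul, pow_add, mul_comm]
  gcongr

lemma two_mul_mul_div_pow_lt (hY : 0 < Y) {σ ρ Q : ℝ} (hσ : 2 ≤ σ) (hρ : ρ ≤ σ)
    (hQ : σ ^ (n + 1) * Y ^ ((n + 1) ^ 2) < Q) :
    2 * ρ * (Y ^ ((n + 1) * (n + 2)) / Q) ^ (n + 1) < Q := by
  have hσ0 : 0 < σ := two_pos.trans_le hσ
  have hQ0 : 0 < Q := lt_trans (by positivity) hQ
  have hσpow : σ ≤ σ ^ (n + 1) := le_self_pow₀ (one_le_two.trans hσ) n.succ_ne_zero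
  have hdiv : σ * (Y ^ ((n + 1) * (n + 2)) / Q) ≤ Y ^ (n + 1) := by
    rw [← mul_div_assoc, div_le_iff₀ hQ0]
    calc σ * Y ^ ((n + 1) * (n + 2)) = Y ^ (n + 1) * (σ * Y ^ ((n + 1) ^ 2)) := by ring
      _ ≤ Y ^ (n + 1) * (σ ^ (n + 1) * Y ^ ((n + 1) ^ 2)) := by gcongr
      _ ≤ Y ^ (n + 1) * Q := by gcongr
  set D := Y ^ ((n + 1) * (n + 2)) / Q
  have hD : 0 ≤ D := by positivity
  calc 2 * ρ * D ^ (n + 1) ≤ 2 * (σ ^ (n + 1) * D ^ (n + 1)) := by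
        rw [mul_assoc]
        gcongr
        exact hρ.trans hσpow
    _ = 2 * (σ * D) ^ (n + 1) := by rw [mul_pow]
    _ ≤ 2 * (Y ^ (n + 1)) ^ (n + 1) := by gcongr
    _ = 2 * Y ^ ((n + 1) ^ 2) := by rw [← pow_mul, sq]
    _ ≤ σ ^ (n + 1) * Y ^ ((n + 1) ^ 2) := by gcongr; exact hσ.trans hσpow
    _ < Q := hQ

lemma isAdmissible_of_lt (hY : 1 ≤ Y) (hkY : k ≤ Y) (hr : 0 < r) {p : ℕ} (hp : p.Prime)
    (hpY : (n + 1 + r : ℕ) * Y < p) (hpq : ¬ p ∣ q) (hqk : ∀ ℓ : ℕ, ℓ.Prime → ℓ ∣ q → k < ℓ)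
    (hq : ((n + 1 + r : ℕ) : ℝ) ^ n * Y ^ (n * (n + 2)) ≤ q) :
    IsAdmissible k n r (Y ^ ((n + 1) * (n + 2))) q p := by
  have hY0 : 0 < Y := one_pos.trans_le hY
  set s := n + 1 + r
  have hs : 2 ≤ (s : ℝ) := mod_cast (by omega : 2 ≤ s)
  have hYp : Y < p := (le_mul_of_one_le_left hY0.le (one_le_two.trans hs)).trans_lt hpY
  refine ⟨hp, hpq, fun ℓ hℓ hdvd => ?_, ?_, ?_⟩
  · obtain hdvd | hdvd := hℓ.dvd_mul.mp hdvd
    · rw [(Nat.prime_dvd_prime_iff_eq hℓ hp).mp hdvd]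
      exact_mod_cast hkY.trans_lt hYp
    · exact hqk ℓ hℓ hdvd
  · have hmod : (s : ℝ) ^ (n + 1) * Y ^ ((n + 1) ^ 2) < (p * q : ℕ) := by
      calc (s : ℝ) ^ (n + 1) * Y ^ ((n + 1) ^ 2) =
            s * Y * (s ^ n * Y ^ (n * (n + 2))) := by ring
        _ < p * (s ^ n * Y ^ (n * (n + 2))) := by gcongr
        _ ≤ (p * q : ℕ) := by push_cast; gcongr
    have hlt := two_mul_mul_div_pow_lt (ρ := r) hY0 hs (mod_cast (by omega : r ≤ s)) hmod
    set D := Y ^ ((n + 1) * (n + 2)) / (p * q : ℕ)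
    have hfloor : (0 : ℝ) ≤ ⌊D⌋ := mod_cast Int.floor_nonneg.mpr (by positivity : 0 ≤ D)
    suffices 2 * (r : ℝ) * (⌊D⌋ : ℝ) ^ (n + 1) < (p * q : ℕ) by exact_mod_cast this
    refine lt_of_le_of_lt ?_ hlt
    gcongr
    exact Int.floor_le D
  · have hq1 : Y ^ (n * (n + 2)) ≤ q :=
      (le_mul_of_one_le_left (by positivity) (one_le_pow₀ (one_le_two.trans hs))).trans hq
    suffices (⌊Y ^ ((n + 1) * (n + 2)) / q⌋ : ℝ) < (p : ℝ) ^ (n + 2) by exact_mod_cast this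
    calc (⌊Y ^ ((n + 1) * (n + 2)) / q⌋ : ℝ) ≤ Y ^ ((n + 1) * (n + 2)) / q := Int.floor_le _
      _ ≤ Y ^ (n + 2) := pow_div_le_pow hY0 hq1
      _ < (p : ℝ) ^ (n + 2) := pow_lt_pow_left₀ hYp hY0.le (by omega)

lemma exponent_mul_le (hk : 2 ≤ k) (hnk : n + 1 ≤ k) (hns : n + 1 < s) :
    (n + 1) * (n + 2) * ((k - 1) * (n + 1) + 1 + s + 1) ≤ 2 * s * k ^ 4 := by
  obtain ⟨c, rfl⟩ := Nat.exists_eq_add_of_le' hk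
  obtain ⟨d, rfl⟩ := Nat.exists_eq_add_of_lt hns
  have hscale : (n + 1) * (n + 2) ≤ 2 * (c + 2) ^ 2 := by nlinarith
  have hpow : (c + 2 - 1) * (n + 1) + 1 + (n + 1 + d + 1) + 1 ≤ (n + 1 + d + 1) * (c + 2) ^ 2 := by
    rw [show c + 2 - 1 = c + 1 by omega]
    nlinarith [Nat.zero_le (c * n), Nat.zero_le (c * d), Nat.zero_le (c ^ 2 * d),
      Nat.zero_le (c ^ 2 * n)]
  exact (Nat.mul_le_mul hscale hpow).trans_eq (by ring)

-- In terms of `Y`, the left-hand side is `O(Y ^ ((n + 1) * (n + 2) * e))` with the exponent `e`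
-- of `exponent_mul_le` lowered by one, which leaves room for the constant.
lemma factorial_mul_pow_lt_prod (hk : 2 ≤ k) (hnk : n + 1 ≤ k) (hns : n + 1 < s) (hY : 1 ≤ Y)
    (hlarge : ((n + 1).factorial : ℝ) * 2 ^ ((k - 1) * (n + 1) + 1 + s) < Y)
    (hq : (q : ℝ) ≤ 2 * Y ^ ((n + 1) * (n + 2))) {P : Finset ℕ} (hcard : #P = 2 * s * k ^ 4)
    (hP : ∀ p ∈ P, Y ≤ p) :
    ((n + 1).factorial : ℤ) * ⌊2 * Y ^ ((n + 1) * (n + 2))⌋ ^ ((k - 1) * (n + 1)) * q *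
      ⌊2 * Y ^ ((n + 1) * (n + 2))⌋ ^ s < ((∏ p ∈ P, p : ℕ) : ℤ) := by
  set X := Y ^ ((n + 1) * (n + 2))
  set e := (k - 1) * (n + 1) + 1 + s
  have hX : 0 ≤ X := by positivity
  have hYX : Y ≤ X := le_self_pow₀ hY (by positivity)
  have hfloor : (0 : ℝ) ≤ ⌊2 * X⌋ := mod_cast Int.floor_nonneg.mpr (by positivity)
  have hfloor_le : (⌊2 * X⌋ : ℝ) ≤ 2 * X := Int.floor_le _
  suffices ((n + 1).factorial : ℝ) * ⌊2 * X⌋ ^ ((k - 1) * (n + 1)) * q * ⌊2 * X⌋ ^ s <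
      ((∏ p ∈ P, p : ℕ) : ℝ) by exact_mod_cast this
  calc ((n + 1).factorial : ℝ) * ⌊2 * X⌋ ^ ((k - 1) * (n + 1)) * q * ⌊2 * X⌋ ^ s
      ≤ (n + 1).factorial * (2 * X) ^ ((k - 1) * (n + 1)) * (2 * X) * (2 * X) ^ s := by gcongr
    _ = (n + 1).factorial * 2 ^ e * X ^ e := by ring
    _ < X * X ^ e := by gcongr; exact hlarge.trans_le hYX
    _ = Y ^ ((n + 1) * (n + 2) * (e + 1)) := by ring
    _ ≤ Y ^ #P := pow_le_pow_right₀ hY ((exponent_mul_le hk hnk hns).trans_eq hcard.symm)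
    _ ≤ ∏ p ∈ P, (p : ℝ) := by
        rw [← prod_const]
        exact prod_le_prod (fun _ _ => by positivity) hP
    _ = ((∏ p ∈ P, p : ℕ) : ℝ) := (Nat.cast_prod ..).symm

end Scale

section DescentStep

variable {k n r q : ℕ} {X Y : ℝ}

lemma div_le_card_intBox (X : ℝ) (q : ℕ) : X / q ≤ #(intBox X q) := by
  have hcard : ⌊X / q⌋ + 1 ≤ (#(intBox X q) : ℤ) := by
    rw [intBox, Int.card_Icc, sub_zero]
    exact Int.self_le_toNat _
  exact (Int.lt_floor_add_one _).le.trans (mod_cast hcard)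

/-- A lower bound for `Y = X ^ (1 / ((n + 1) * (n + 2)))` which makes `X` sufficiently large in
`Icount (n + 1 + r) k (n + 1) X q b`. -/
noncomputable def scaleThreshold (k n r : ℕ) : ℝ :=
  1 + k + (2 * (n + 1 + r : ℕ)) ^ n * (1 + regularThreshold (n + 1 + r)) +
    (n + 1).factorial * 2 ^ ((k - 1) * (n + 1) + 1 + (n + 1 + r))

lemma bounds_of_scaleThreshold_le (hY : scaleThreshold k n r ≤ Y) :
    1 ≤ Y ∧ k < Y ∧ (2 * (n + 1 + r : ℕ)) ^ n * (1 + regularThreshold (n + 1 + r)) ≤ Y ∧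
      ((n + 1).factorial : ℝ) * 2 ^ ((k - 1) * (n + 1) + 1 + (n + 1 + r)) < Y := by
  have hthreshold := regularThreshold_nonneg (n + 1 + r)
  have hregular : (0 : ℝ) ≤ (2 * (n + 1 + r : ℕ)) ^ n * (1 + regularThreshold (n + 1 + r)) := by
    positivity
  have hfactorial : (0 : ℝ) ≤
      (n + 1).factorial * 2 ^ ((k - 1) * (n + 1) + 1 + (n + 1 + r)) := by positivity
  have hk : (0 : ℝ) ≤ k := k.cast_nonneg
  rw [scaleThreshold] at hY
  refine ⟨?_, ?_, ?_, ?_⟩ <;> linarith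

lemma one_add_regularThreshold_le_div (hY : scaleThreshold k n r ≤ Y) (hq0 : 0 < q)
    (hq : (q : ℝ) ≤ (2 * (n + 1 + r : ℕ)) ^ n * Y ^ (n * (n + 2))) :
    1 + regularThreshold (n + 1 + r) ≤ Y ^ ((n + 1) * (n + 2)) / q := by
  obtain ⟨hY1, -, hregular, -⟩ := bounds_of_scaleThreshold_le hY
  have hthreshold := regularThreshold_nonneg (n + 1 + r)
  rw [le_div_iff₀' (mod_cast hq0)]
  calc q * (1 + regularThreshold (n + 1 + r))
      ≤ (2 * (n + 1 + r : ℕ)) ^ n * Y ^ (n * (n + 2)) * (1 + regularThreshold (n + 1 + r)) := by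
        gcongr
    _ = Y ^ (n * (n + 2)) * ((2 * (n + 1 + r : ℕ)) ^ n *
          (1 + regularThreshold (n + 1 + r))) := by ring
    _ ≤ Y ^ (n * (n + 2)) * Y ^ (n + 2) := by
        gcongr
        exact hregular.trans (le_self_pow₀ hY1 (by omega))
    _ = Y ^ ((n + 1) * (n + 2)) := by ring

lemma exists_Icount_le_of_scaleThreshold_le (hk : 2 ≤ k) (hnk : n + 1 ≤ k) (hr : 0 < r)
    (hY : scaleThreshold k n r ≤ Y) (hqk : ∀ ℓ : ℕ, ℓ.Prime → ℓ ∣ q → k < ℓ)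
    (hq_ge : ((n + 1 + r : ℕ) : ℝ) ^ n * Y ^ (n * (n + 2)) ≤ q)
    (hq_le : (q : ℝ) ≤ (2 * (n + 1 + r : ℕ)) ^ n * Y ^ (n * (n + 2))) {P : Finset ℕ}
    (hcard : #P = 2 * (n + 1 + r) * k ^ 4)
    (hP : ∀ p ∈ P, p.Prime ∧ (n + 1 + r : ℕ) * Y < p) {b : ℤ} (hb0 : 0 ≤ b) (hbq : b < q)
    (hb : IsCoprime b q) :
    ∃ p ∈ P, ∃ a ∈ unitResidues p q b, IsCoprime (b + a * q) ((p * q : ℕ) : ℤ) ∧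
      Icount (n + 1 + r) k (n + 1) (Y ^ ((n + 1) * (n + 2))) q b ≤
        12 * (2 * (n + 1 + r) * k ^ 4) ^ 2 * nonsingularBound n k *
          p ^ (2 * r + (n + 1) * (n + 2) / 2 + (n + 1) * (n + 2)) *
          Icount r k (n + 2) (Y ^ ((n + 1) * (n + 2))) (p * q) (b + a * q) := by
  obtain ⟨hY1, hkY, -, hfactorial⟩ := bounds_of_scaleThreshold_le hY
  have hq0 : 0 < q := by exact_mod_cast hb0.trans_lt hbq
  have hbox := one_add_regularThreshold_le_div hY hq0 hq_le
  have hthreshold := regularThreshold_nonneg (n + 1 + r)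
  have hqX : (q : ℝ) ≤ Y ^ ((n + 1) * (n + 2)) :=
    (one_le_div₀ (mod_cast hq0)).mp ((le_add_of_nonneg_right hthreshold).trans hbox)
  have hYP : ∀ p ∈ P, Y ≤ p := fun p hp =>
    (le_mul_of_one_le_left (by positivity) (mod_cast (by omega))).trans (hP p hp).2.le
  obtain ⟨p, hp, hpq, hle⟩ := exists_Icount_le_mul_energyOn_goodTuples (r := r) hnk hq0 hb0 hbq
    (fun p hp => (hP p hp).1)
    ((le_add_of_nonneg_left zero_le_one).trans (hbox.trans (div_le_card_intBox _ q)))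
    (factorial_mul_pow_lt_prod hk hnk (by omega) hY1 hfactorial (by linarith) hcard hYP)
  have hadm := isAdmissible_of_lt hY1 hkY.le hr (hP p hp).1 (hP p hp).2 hpq hqk hq_ge
  obtain ⟨a, ha, hgood⟩ := hadm.exists_energyOn_goodTuples_le hnk hr hb
  refine ⟨p, hp, a, ha, isCoprime_of_mem_unitResidues hadm.prime hb ha, ?_⟩
  refine (hle.trans (Nat.mul_le_mul_left _ hgood)).trans_eq ?_
  rw [hcard]
  ring

end DescentStep

section PrimeFactors

lemma prod_rpow_eq_rpow (n : ℕ) {X : ℝ} (hX : 0 < X) :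
    ∏ i : Fin n, X ^ ((1 : ℝ) / ((((i : ℕ) : ℝ) + 1) * (((i : ℕ) : ℝ) + 2))) =
      X ^ ((n : ℝ) / (n + 1)) := by
  induction n with
  | zero => simp
  | succ n ih =>
    rw [Fin.prod_univ_castSucc]
    simp only [Fin.val_castSucc, Fin.val_last]
    rw [ih, ← Real.rpow_add hX]
    congr 1
    push_cast
    field_simp
    ring

lemma rpow_one_div_pow_eq {n : ℕ} {X : ℝ} (hX : 0 ≤ X) :
    (X ^ ((1 : ℝ) / (((n + 1 : ℕ) : ℝ) * (((n + 1 : ℕ) : ℝ) + 1)))) ^ ((n + 1) * (n + 2)) = X := by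
  convert Real.rpow_inv_natCast_pow hX (n := (n + 1) * (n + 2)) (by positivity) using 3
  push_cast
  rw [one_div]
  ring

lemma prod_mem_Icc_of_mem_Ioc {n : ℕ} {c X Y : ℝ} (hc : 0 ≤ c) (hY : 0 < Y)
    (hX : X = Y ^ ((n + 1) * (n + 2))) {pr : Fin n → ℕ}
    (hpr : ∀ i : Fin n, c * X ^ ((1 : ℝ) / ((((i : ℕ) : ℝ) + 1) * (((i : ℕ) : ℝ) + 2))) < pr i ∧
      (pr i : ℝ) ≤ 2 * c * X ^ ((1 : ℝ) / ((((i : ℕ) : ℝ) + 1) * (((i : ℕ) : ℝ) + 2)))) :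
    c ^ n * Y ^ (n * (n + 2)) ≤ ((∏ i, pr i : ℕ) : ℝ) ∧
      ((∏ i, pr i : ℕ) : ℝ) ≤ (2 * c) ^ n * Y ^ (n * (n + 2)) := by
  have hX0 : 0 < X := hX ▸ pow_pos hY _
  have htelescope : ∏ i : Fin n, X ^ ((1 : ℝ) / ((((i : ℕ) : ℝ) + 1) * (((i : ℕ) : ℝ) + 2))) =
      Y ^ (n * (n + 2)) := by
    rw [prod_rpow_eq_rpow n hX0, hX, ← Real.rpow_natCast, ← Real.rpow_natCast,
      ← Real.rpow_mul hY.le]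
    congr 1
    push_cast
    field_simp
  have hscale (d : ℝ) : ∏ i : Fin n, (d * X ^ ((1 : ℝ) / ((((i : ℕ) : ℝ) + 1) *
      (((i : ℕ) : ℝ) + 2)))) = d ^ n * Y ^ (n * (n + 2)) := by
    rw [prod_mul_distrib, htelescope, prod_const, card_univ, Fintype.card_fin]
  rw [← hscale, ← hscale, Nat.cast_prod]
  exact ⟨prod_le_prod (fun i _ => by positivity) fun i _ => (hpr i).1.le,
    prod_le_prod (fun i _ => by positivity) fun i _ => (hpr i).2⟩

lemma lt_of_prime_dvd_prod {n k : ℕ} {c X : ℝ} (hc : 1 ≤ c) (hX : 1 ≤ X)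
    (hk : k ≤ X ^ ((1 : ℝ) / (((n + 1 : ℕ) : ℝ) * (((n + 1 : ℕ) : ℝ) + 1)))) {pr : Fin n → ℕ}
    (hpr : ∀ i : Fin n, (pr i).Prime ∧
      c * X ^ ((1 : ℝ) / ((((i : ℕ) : ℝ) + 1) * (((i : ℕ) : ℝ) + 2))) < pr i) {ℓ : ℕ}
    (hℓ : ℓ.Prime) (hdvd : ℓ ∣ ∏ i, pr i) : k < ℓ := by
  obtain ⟨i, -, hi⟩ := (hℓ.prime.dvd_finsetProd_iff _).mp hdvd
  rw [(Nat.prime_dvd_prime_iff_eq hℓ (hpr i).1).mp hi]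
  have hin : ((i : ℕ) : ℝ) ≤ n := mod_cast i.isLt.le
  have hexp : (1 : ℝ) / (((n + 1 : ℕ) : ℝ) * (((n + 1 : ℕ) : ℝ) + 1)) ≤
      1 / ((((i : ℕ) : ℝ) + 1) * (((i : ℕ) : ℝ) + 2)) := by
    push_cast
    gcongr ?_ / (?_ * ?_) <;> linarith
  suffices (k : ℝ) < pr i by exact_mod_cast this
  calc (k : ℝ) ≤ X ^ ((1 : ℝ) / ((((i : ℕ) : ℝ) + 1) * (((i : ℕ) : ℝ) + 2))) :=
        hk.trans (Real.rpow_le_rpow_of_exponent_le hX hexp)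
    _ ≤ c * X ^ ((1 : ℝ) / ((((i : ℕ) : ℝ) + 1) * (((i : ℕ) : ℝ) + 2))) :=
        le_mul_of_one_le_left (by positivity) hc
    _ < pr i := (hpr i).2

end PrimeFactors

lemma cast_descent_exponent (n r : ℕ) :
    2 * ((n + 1 + r : ℕ) : ℝ) - 2 * ((n + 1 : ℕ) : ℝ) +
        3 * ((n + 1 : ℕ) : ℝ) * (((n + 1 : ℕ) : ℝ) + 1) / 2 =
      ((2 * r + (n + 1) * (n + 2) / 2 + (n + 1) * (n + 2) : ℕ) : ℝ) := by
  have heven : (((n + 1) * (n + 2) / 2 : ℕ) : ℝ) = ((n + 1) * (n + 2) : ℕ) / 2 :=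
    Nat.cast_div (Nat.even_mul_succ_self (n + 1)).two_dvd two_ne_zero
  rw [Nat.cast_add _ ((n + 1) * (n + 2)), Nat.cast_add (2 * r), heven]
  push_cast
  ring

theorem lemma8_3_general (k s m : ℕ) (hk : 2 ≤ k) (hm1 : 1 ≤ m) (hmk : m ≤ k) (hsm : m < s) :
    ∃ C : ℝ, 0 < C ∧ ∃ X₀ : ℝ, ∀ X : ℝ, X₀ ≤ X →
    ∀ pr : Fin (m - 1) → ℕ,
      (∀ i : Fin (m - 1), (pr i).Prime ∧
        (s : ℝ) * X ^ ((1 : ℝ) / ((((i : ℕ) : ℝ) + 1) * (((i : ℕ) : ℝ) + 2))) < (pr i : ℝ) ∧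
        (pr i : ℝ) ≤ 2 * (s : ℝ) * X ^ ((1 : ℝ) / ((((i : ℕ) : ℝ) + 1) * (((i : ℕ) : ℝ) + 2)))) →
    ∀ P : Finset ℕ, P.card = 2 * s * k ^ 4 →
      (∀ p ∈ P, p.Prime ∧ (s : ℝ) * X ^ ((1 : ℝ) / ((m : ℝ) * ((m : ℝ) + 1))) < (p : ℝ)) →
    ∀ b : ℤ, 0 ≤ b → b < ((∏ i, pr i : ℕ) : ℤ) →
      IsCoprime b ((∏ i, pr i : ℕ) : ℤ) →
    ∃ p ∈ P, ∃ a : ℤ, 0 ≤ a ∧ a < (p : ℤ) ∧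
      IsCoprime (b + a * ((∏ i, pr i : ℕ) : ℤ)) ((p : ℤ) * ((∏ i, pr i : ℕ) : ℤ)) ∧
      (Icount s k m X (∏ i, pr i) b : ℝ) ≤
        C * (p : ℝ) ^ (2 * (s : ℝ) - 2 * (m : ℝ) + 3 * (m : ℝ) * ((m : ℝ) + 1) / 2) *
          (Icount (s - m) k (m + 1) X (p * ∏ i, pr i)
            (b + a * ((∏ i, pr i : ℕ) : ℤ)) : ℝ) := by
  obtain ⟨n, rfl⟩ := Nat.exists_eq_add_of_le' hm1
  obtain ⟨r, rfl⟩ := Nat.exists_eq_add_of_le hsm.le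
  have hr : 0 < r := by omega
  set s := n + 1 + r with hs
  have hY₀ := (bounds_of_scaleThreshold_le (le_refl (scaleThreshold k n r))).1
  set C := 12 * (2 * s * k ^ 4) ^ 2 * nonsingularBound n k
  refine ⟨(C + 1 : ℕ), by positivity, scaleThreshold k n r ^ ((n + 1) * (n + 2)), ?_⟩
  intro X hX pr hpr P hcard hP b hb0 hbq hb
  have hX1 : 1 ≤ X := (one_le_pow₀ hY₀).trans hX
  set Y : ℝ := X ^ ((1 : ℝ) / (((n + 1 : ℕ) : ℝ) * (((n + 1 : ℕ) : ℝ) + 1)))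
  have hXY : X = Y ^ ((n + 1) * (n + 2)) := (rpow_one_div_pow_eq (by linarith)).symm
  have hY : scaleThreshold k n r ≤ Y :=
    le_of_pow_le_pow_left₀ (by positivity) (by positivity) (hX.trans_eq hXY)
  obtain ⟨hq_ge, hq_le⟩ := prod_mem_Icc_of_mem_Ioc (by positivity) (by positivity) hXY
    fun i => (hpr i).2
  have hqk := fun ℓ => lt_of_prime_dvd_prod (k := k) (ℓ := ℓ) (mod_cast (by omega : 1 ≤ s)) hX1
    (bounds_of_scaleThreshold_le hY).2.1.le fun i => ⟨(hpr i).1, (hpr i).2.1⟩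
  obtain ⟨p, hp, a, ha, hcop, hle⟩ :=
    exists_Icount_le_of_scaleThreshold_le hk hmk hr hY hqk hq_ge hq_le hcard hP hb0 hbq hb
  rw [← hXY] at hle
  obtain ⟨ha0, hap⟩ := mem_Ico.mp (mem_filter.mp ha).1
  refine ⟨p, hp, a, ha0, hap, by rwa [Nat.cast_mul] at hcop, ?_⟩
  rw [cast_descent_exponent, Real.rpow_natCast, hs, Nat.add_sub_cancel_left]
  exact_mod_cast hle.trans (Nat.mul_le_mul_right _ (Nat.mul_le_mul_right _ (Nat.le_succ C)))

/-- Lemma 8.3: with q = p_1 ⋯ p_{m-1}, p_i ∈ Y_i, 𝒫_m a set of 2sk⁴ primes of Y_m,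
and 0 ≤ b < q with (b,q) = 1, one has
I_{s,m}(X;q,b) ≤ C max_{p ∈ 𝒫_m} p^{2s-2m+3m(m+1)/2} max_{a ∈ ℬ(p)}
I_{s-m,m+1}(X;pq,b+aq), where ℬ(p) = {a : 0 ≤ a < p, (b+aq,pq) = 1}; here
Y_i consists of the primes in (s X^{1/(i(i+1))}, 2s X^{1/(i(i+1))}]. -/
theorem lemma8_3 (k s m : ℕ) (hk : 3 ≤ k) (hm1 : 1 ≤ m) (hmk : m ≤ k - 1)
    (hsm : m < s) :
    ∃ C : ℝ, 0 < C ∧ ∃ X₀ : ℝ, ∀ X : ℝ, X₀ ≤ X →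
    ∀ pr : Fin (m-1) → ℕ,
      (∀ i : Fin (m-1), (pr i).Prime ∧
        (s:ℝ) * X ^ ((1:ℝ)/((((i:ℕ):ℝ)+1)*(((i:ℕ):ℝ)+2))) < (pr i : ℝ) ∧
        (pr i : ℝ) ≤ 2*(s:ℝ) * X ^ ((1:ℝ)/((((i:ℕ):ℝ)+1)*(((i:ℕ):ℝ)+2)))) →
    ∀ P : Finset ℕ, P.card = 2*s*k^4 →
      (∀ p ∈ P, p.Prime ∧
        (s:ℝ) * X ^ ((1:ℝ)/((m:ℝ)*((m:ℝ)+1))) < (p:ℝ) ∧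
        (p:ℝ) ≤ 2*(s:ℝ) * X ^ ((1:ℝ)/((m:ℝ)*((m:ℝ)+1)))) →
    ∀ b : ℤ, 0 ≤ b → b < ((∏ i, pr i : ℕ) : ℤ) →
      IsCoprime b ((∏ i, pr i : ℕ) : ℤ) →
    ∃ p ∈ P, ∃ a : ℤ, 0 ≤ a ∧ a < (p:ℤ) ∧
      IsCoprime (b + a * ((∏ i, pr i : ℕ) : ℤ)) ((p:ℤ) * ((∏ i, pr i : ℕ) : ℤ)) ∧
      (Icount s k m X (∏ i, pr i) b : ℝ) ≤
        C * (p:ℝ) ^ (2*(s:ℝ) - 2*(m:ℝ) + 3*(m:ℝ)*((m:ℝ)+1)/2) *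
          (Icount (s-m) k (m+1) X (p * ∏ i, pr i) (b + a * ((∏ i, pr i : ℕ) : ℤ)) : ℝ) := by
  obtain ⟨C, hC, X₀, h⟩ := lemma8_3_general k s m (by omega) hm1 (by omega) hsm
  exact ⟨C, hC, X₀, fun X hX pr hpr P hc hP =>
    h X hX pr hpr P hc fun p hp => ⟨(hP p hp).1, (hP p hp).2.1⟩⟩
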